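/- (Burgess bound combined with the Vinogradov trick.) For every ε > 0 there exists p₀ such that for every prime p ≥ p₀ and every prime q dividing p − 1, there exists an integer n with 1 ≤ n ≤ p^{1/(4√e)+ε} such that the residue of n in (ZMod p)ˣ is not a q-th power. -/

import Mathlib

section

open Polynomial

/-- A finite sum of polynomials with pairwise distinct multiplicities at `c` is nonzero. -/
lemma bv_sum_ne_zero {F ι : Type*} [Field F] (s : Finset ι) (P : ι → F[X]) (c : F)
    (hd : ∀ i ∈ s, ∀ j ∈ s, P i ≠ 0 → P j ≠ 0 →
      (P i).rootMultiplicity c = (P j).rootMultiplicity c → i = j)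
    (hne : ∃ i ∈ s, P i ≠ 0) : ∑ i ∈ s, P i ≠ 0 := by
  classical
  obtain ⟨i1, hi1, hi1'⟩ := hne
  obtain ⟨i0, hi0, hmin⟩ := Finset.exists_min_image (s.filter (fun i => P i ≠ 0))
    (fun i => (P i).rootMultiplicity c) ⟨i1, by simp [hi1, hi1']⟩
  simp only [Finset.mem_filter] at hi0 hmin
  intro h0
  rw [← Finset.add_sum_erase s _ hi0.1] at h0
  have hdvd : (X - C c) ^ ((P i0).rootMultiplicity c + 1) ∣ ∑ i ∈ s.erase i0, P i := by
    apply Finset.dvd_sum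
    intro i hi
    rw [Finset.mem_erase] at hi
    by_cases hz : P i = 0
    · simp [hz]
    · rw [← le_rootMultiplicity_iff hz]
      have h1 := hmin i ⟨hi.2, hz⟩
      have h2 : (P i).rootMultiplicity c ≠ (P i0).rootMultiplicity c := fun h =>
        hi.1 (hd i hi.2 i0 hi0.1 hz hi0.2 h)
      omega
  have h2 : (X - C c) ^ ((P i0).rootMultiplicity c + 1) ∣ P i0 := by
    obtain ⟨w, hw⟩ := hdvd
    exact ⟨-w, by linear_combination h0 - hw⟩
  exact pow_rootMultiplicity_not_dvd hi0.2 c h2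

/-- The operator describing `l`-fold derivatives of `f ^ a * h`. -/
noncomputable def bvOp {F : Type*} [Field F] (f : F[X]) (a : ℕ) : ℕ → F[X] →ₗ[F] F[X]
  | 0 => LinearMap.id
  | l + 1 => (LinearMap.mulLeft F f) ∘ₗ derivative ∘ₗ (bvOp f a l) +
      (LinearMap.mulLeft F (((a - l : ℕ) : F[X]) * derivative f)) ∘ₗ (bvOp f a l)

lemma bvOp_succ {F : Type*} [Field F] (f : F[X]) (a l : ℕ) (h : F[X]) :
    bvOp f a (l + 1) h = f * derivative (bvOp f a l h) +
      ((a - l : ℕ) : F[X]) * derivative f * bvOp f a l h := by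
  simp [bvOp, mul_assoc]

lemma bvOp_deriv {F : Type*} [Field F] (f : F[X]) (a l : ℕ) (hl : l ≤ a) (h : F[X]) :
    derivative^[l] (f ^ a * h) = f ^ (a - l) * bvOp f a l h := by
  induction l with
  | zero => simp [bvOp]
  | succ l ih =>
    rw [Function.iterate_succ_apply', ih (by omega), bvOp_succ, derivative_mul, derivative_pow]
    obtain ⟨b, hb⟩ : ∃ b, a - l = b + 1 := ⟨a - l - 1, by omega⟩
    have hb' : a - (l + 1) = b := by omega
    rw [hb', hb]
    simp only [Nat.add_sub_cancel, map_natCast]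
    ring

lemma bvOp_natDegree {F : Type*} [Field F] (f : F[X]) (D n : ℕ) (hf : f.natDegree ≤ D)
    (a l : ℕ) (h : F[X]) (hh : h.natDegree ≤ n) : (bvOp f a l h).natDegree ≤ n + l * D := by
  induction l with
  | zero => simpa [bvOp] using hh
  | succ l ih =>
    rw [bvOp_succ]
    have hd1 : (derivative (bvOp f a l h)).natDegree ≤ n + l * D :=
      (natDegree_derivative_le _).trans (by omega)
    have hd2 : (derivative f).natDegree ≤ D := (natDegree_derivative_le _).trans (by omega)
    have hc : (((a - l : ℕ) : F[X])).natDegree = 0 := natDegree_natCast _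
    have e1 : n + (l + 1) * D = D + (n + l * D) := by ring
    rw [e1]
    refine natDegree_add_le_of_degree_le ?_ ?_
    · exact natDegree_mul_le_of_le hf hd1
    · refine natDegree_mul_le_of_le ?_ ih
      refine (natDegree_mul_le).trans (by omega)

lemma bv_iterate_mul {F : Type*} [Field F] (u h : F[X]) (hu : derivative u = 0) (l : ℕ) :
    derivative^[l] (u * h) = u * derivative^[l] h := by
  induction l with
  | zero => simp
  | succ l ih =>
    rw [Function.iterate_succ_apply', ih, derivative_mul, hu, Function.iterate_succ_apply']
    ring

/-- arithmetic: distinct multiplicities. -/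
lemma bv_arith (p q G e H : ℕ) (hp : G * q = p - 1) (hp1 : 1 ≤ p) (he : Nat.Coprime e q)
    (hH : H + e ≤ G) (j k v j' k' v' : ℕ) (hj : j < q) (hj' : j' < q) (hv : v < H) (hv' : v' < H)
    (h : j * G * e + p * k + v = j' * G * e + p * k' + v') : j = j' ∧ k = k' := by
  have hq : 0 < q := by omega
  have e1 := Nat.div_add_mod (j * e) q
  have e2 := Nat.div_add_mod (j' * e) q
  have hs1 : (j * e) / q ≤ e := by
    apply Nat.div_le_of_le_mul
    exact Nat.mul_le_mul_right e hj.le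
  have hs2 : (j' * e) / q ≤ e := by
    apply Nat.div_le_of_le_mul
    exact Nat.mul_le_mul_right e hj'.le
  have ht1 := Nat.mod_lt (j * e) hq
  have ht2 := Nat.mod_lt (j' * e) hq
  generalize hs : (j * e) / q = s at *
  generalize ht : (j * e) % q = t at *
  generalize hs' : (j' * e) / q = s' at *
  generalize ht' : (j' * e) % q = t' at *
  obtain ⟨w, hw⟩ : ∃ w, w + s = v + e := ⟨v + e - s, by omega⟩
  obtain ⟨w', hw'⟩ : ∃ w', w' + s' = v' + e := ⟨v' + e - s', by omega⟩
  have hpp : p = G * q + 1 := by omega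
  have hwG : w < G := by omega
  have hwG' : w' < G := by omega
  have key : p * (s + k) + (G * t + w) = p * (s' + k') + (G * t' + w') := by
    have a1 : j * G * e = G * (q * s + t) := by rw [e1]; ring
    have a2 : j' * G * e = G * (q * s' + t') := by rw [e2]; ring
    rw [a1, a2] at h
    rw [hpp] at h ⊢
    linarith
  have b1 : G * t + w < p := by
    have : G * (t + 1) ≤ G * q := Nat.mul_le_mul_left G ht1
    rw [hpp]; linarith
  have b2 : G * t' + w' < p := by
    have : G * (t' + 1) ≤ G * q := Nat.mul_le_mul_left G ht2
    rw [hpp]; linarith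
  have c1 : G * t + w = G * t' + w' := by
    have := congrArg (· % p) key
    simpa [Nat.mul_add_mod, Nat.mod_eq_of_lt b1, Nat.mod_eq_of_lt b2] using this
  have c2 : t = t' := by
    have := congrArg (· / G) c1
    have hG : 0 < G := by omega
    simpa [Nat.mul_add_div hG, Nat.div_eq_of_lt hwG, Nat.div_eq_of_lt hwG'] using this
  have c3 : j = j' := by
    have hm : j * e ≡ j' * e [MOD q] := by
      unfold Nat.ModEq; rw [ht, ht', c2]
    have hm2 : j ≡ j' [MOD q] := Nat.ModEq.cancel_right_of_coprime (by
      rw [Nat.coprime_comm] at he; exact he) hm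
    exact Nat.ModEq.eq_of_lt_of_lt hm2 hj hj'
  refine ⟨c3, ?_⟩
  have c4 : s = s' := by rw [← hs, ← hs', c3]
  have c5 : p * (s + k) = p * (s' + k') := by omega
  have c6 := Nat.eq_of_mul_eq_mul_left (by omega : 0 < p) c5
  omega

/-- Stepanov method: upper bound for the number of points on one branch. -/
theorem bv_stepanov (p q : ℕ) [Fact p.Prime] (G : ℕ) (hG : G * q = p - 1)
    (f : (ZMod p)[X]) (hf0 : f ≠ 0) (c : ZMod p) (D : ℕ) (hD : f.natDegree ≤ D)
    (hcop : Nat.Coprime (f.rootMultiplicity c) q) (ζ : ZMod p) (H K M : ℕ)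
    (hH0 : 1 ≤ H) (hK0 : 1 ≤ K) (hH : H + D ≤ G) (hM : M ≤ p)
    (hdim : M * (H + K + M * D) < q * K * H) :
    M * (Finset.univ.filter (fun x : ZMod p => f.eval x ≠ 0 ∧ (f.eval x) ^ G = ζ)).card ≤
      D * (M + p) + p * K + H := by
  classical
  have hp : p.Prime := Fact.out
  set W := H + K + M * D with hW
  let V := Fin q × Fin K → degreeLT (ZMod p) H
  let Q : V → ℕ → (ZMod p)[X] := fun a l =>
    ∑ i : Fin q × Fin K, C (ζ ^ (i.1 : ℕ)) * (X - C c) ^ (i.2 : ℕ) *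
      bvOp f (M + i.1 * G) l (a i : (ZMod p)[X])
  let Φ : V →ₗ[ZMod p] (Fin M × Fin W → ZMod p) :=
    { toFun := fun a lw => (Q a lw.1).coeff lw.2
      map_add' := by
        intro a b
        funext lw
        have hab : ∀ i, (a + b) i = a i + b i := fun _ => rfl
        simp [Q, hab, mul_add, Finset.sum_add_distrib]
      map_smul' := by
        intro t a
        funext lw
        have hab : ∀ i, (t • a) i = t • a i := fun _ => rfl
        simp [Q, hab, Finset.mul_sum] }
  have hfin : Module.finrank (ZMod p) (Fin M × Fin W → ZMod p) < Module.finrank (ZMod p) V := by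
    have h1 : Module.finrank (ZMod p) V = q * K * H := by
      have : Module.finrank (ZMod p) (degreeLT (ZMod p) H) = H := by
        rw [(degreeLTEquiv (ZMod p) H).finrank_eq]; simp
      have : Module.finrank (ZMod p) V =
          Fintype.card (Fin q × Fin K) * Module.finrank (ZMod p) (degreeLT (ZMod p) H) := by
        simp only [V]
        rw [Module.finrank_pi_fintype]; simp
      rw [this]
      simp [*]
    rw [h1]
    simpa using hdim
  have : FiniteDimensional (ZMod p) (degreeLT (ZMod p) H) :=
    LinearEquiv.finiteDimensional (degreeLTEquiv (ZMod p) H).symm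
  have : FiniteDimensional (ZMod p) V := by
    simp only [V]; infer_instance
  have hker := LinearMap.ker_ne_bot_of_finrank_lt (f := Φ) hfin
  obtain ⟨a, ha, hane⟩ := (Submodule.ne_bot_iff _).1 hker
  have hdeg : ∀ i, (a i : (ZMod p)[X]).natDegree ≤ H - 1 := by
    intro i
    have := (mem_degreeLT.1 (a i).2)
    by_cases hz : (a i : (ZMod p)[X]) = 0
    · rw [hz]; simp
    · have := (natDegree_lt_iff_degree_lt hz).2 this
      omega
  have hQ : ∀ l < M, Q a l = 0 := by
    intro l hl
    have hQdeg : (Q a l).natDegree < W := by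
      have : (Q a l).natDegree ≤ (K - 1) + ((H - 1) + l * D) := by
        refine natDegree_sum_le_of_forall_le _ _ ?_
        intro i _
        refine natDegree_mul_le_of_le ?_ (bvOp_natDegree f D _ hD _ _ _ (hdeg i))
        refine (natDegree_C_mul_le _ _).trans ?_
        rw [natDegree_pow, natDegree_X_sub_C]
        have := i.2.2
        omega
      have h2 : l * D ≤ M * D := Nat.mul_le_mul_right D hl.le
      omega
    ext w
    by_cases hw : w < W
    · have := congrFun (LinearMap.mem_ker.1 ha) (⟨l, hl⟩, ⟨w, hw⟩)
      simpa [Φ] using this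
    · rw [coeff_eq_zero_of_natDegree_lt (by omega)]; simp
  -- the auxiliary polynomial
  let T : Fin q × Fin K → (ZMod p)[X] := fun i =>
    ((X - C c) ^ p) ^ (i.2 : ℕ) * (f ^ (M + i.1 * G) * (a i : (ZMod p)[X]))
  have hT0 : ∀ i, T i ≠ 0 → (a i : (ZMod p)[X]) ≠ 0 := by
    intro i hi h
    apply hi; simp [T, h]
  have hXc : (X - C c : (ZMod p)[X]) ≠ 0 := X_sub_C_ne_zero c
  have hmpow : ∀ n, (f ^ n).rootMultiplicity c = n * f.rootMultiplicity c := by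
    intro n
    rw [← count_roots, ← count_roots, roots_pow]; simp
  have hmult : ∀ i, T i ≠ 0 → (T i).rootMultiplicity c =
      (i.1 * G * f.rootMultiplicity c + p * i.2 + (a i : (ZMod p)[X]).rootMultiplicity c)
        + M * f.rootMultiplicity c := by
    intro i hi
    have h1 := hT0 i hi
    simp only [T] at hi ⊢
    rw [rootMultiplicity_mul hi, rootMultiplicity_mul (right_ne_zero_of_mul hi), hmpow, ← pow_mul,
      rootMultiplicity_X_sub_C_pow]
    ring
  have hroot_deg : ∀ h : (ZMod p)[X], h.rootMultiplicity c ≤ h.natDegree := by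
    intro h
    rw [← count_roots]
    exact (Multiset.count_le_card _ _).trans (card_roots' h)
  set R := ∑ i, T i with hR
  have hRne : R ≠ 0 := by
    refine bv_sum_ne_zero _ _ c ?_ ?_
    · intro i _ j _ hi hj hij
      rw [hmult i hi, hmult j hj] at hij
      have hij' := Nat.add_right_cancel hij
      have h1 := (hroot_deg (a i)).trans (hdeg i)
      have h2 := (hroot_deg (a j)).trans (hdeg j)
      have h3 := (hroot_deg f).trans hD
      have := bv_arith p q G (f.rootMultiplicity c) H hG hp.one_lt.le hcop (by omega)
        i.1 i.2 _ j.1 j.2 _ i.1.2 j.1.2 (by omega) (by omega) hij'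
      exact Prod.ext (Fin.ext this.1) (Fin.ext this.2)
    · by_contra hcon
      push Not at hcon
      apply hane
      funext i
      have := hcon i (Finset.mem_univ i)
      simp only [T] at this
      have h2 := (mul_eq_zero.1 this).resolve_left (pow_ne_zero _ (pow_ne_zero _ hXc))
      have h3 := (mul_eq_zero.1 h2).resolve_left (pow_ne_zero _ hf0)
      exact Subtype.ext h3
  have hder : ∀ l < M, derivative^[l] R = ∑ i : Fin q × Fin K, ((X - C c) ^ p) ^ (i.2 : ℕ) *
      (f ^ (M + i.1 * G - l) * bvOp f (M + i.1 * G) l (a i : (ZMod p)[X])) := by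
    intro l hl
    rw [hR, iterate_derivative_sum]
    refine Finset.sum_congr rfl fun i _ => ?_
    simp only [T]
    rw [bv_iterate_mul, bvOp_deriv _ _ _ (by omega)]
    rw [← pow_mul, derivative_pow]
    simp
  set S := Finset.univ.filter (fun x : ZMod p => f.eval x ≠ 0 ∧ (f.eval x) ^ G = ζ) with hS
  have hvan : ∀ x ∈ S, ∀ l < M, (derivative^[l] R).eval x = 0 := by
    intro x hx l hl
    rw [hS, Finset.mem_filter] at hx
    obtain ⟨-, hx1, hx2⟩ := hx
    rw [hder l hl]
    have : eval x (∑ i : Fin q × Fin K, ((X - C c) ^ p) ^ (i.2 : ℕ) *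
      (f ^ (M + i.1 * G - l) * bvOp f (M + i.1 * G) l (a i : (ZMod p)[X]))) =
        (f.eval x) ^ (M - l) * (Q a l).eval x := by
      simp only [Q, eval_finsetSum, Finset.mul_sum]
      refine Finset.sum_congr rfl fun i _ => ?_
      simp only [eval_mul, eval_pow, eval_sub, eval_X, eval_C, ZMod.pow_card]
      have : M + (i.1 : ℕ) * G - l = (M - l) + G * (i.1 : ℕ) := by
        rw [mul_comm]; omega
      rw [this, pow_add, pow_mul, hx2]
      ring
    rw [this, hQ l hl]; simp
  have hmulge : ∀ x ∈ S, M ≤ R.rootMultiplicity x := by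
    intro x hx
    rcases Nat.eq_zero_or_pos M with h0 | h0
    · omega
    · have : M - 1 < R.rootMultiplicity x := by
        rw [lt_rootMultiplicity_iff_isRoot_iterate_derivative_of_mem_nonZeroDivisors hRne]
        · intro m hm
          exact hvan x hx m (by omega)
        · rw [mem_nonZeroDivisors_iff_ne_zero]
          intro h
          rw [ZMod.natCast_eq_zero_iff, hp.dvd_factorial] at h
          omega
      omega
  have hcount : M * S.card ≤ R.natDegree := by
    refine le_trans ?_ (card_roots' R)
    calc M * S.card = ∑ x ∈ S, M := by simp [mul_comm]
      _ ≤ ∑ x ∈ S, R.roots.count x := Finset.sum_le_sum fun x hx => by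
          rw [count_roots]; exact hmulge x hx
      _ ≤ R.roots.card := by
          rw [← Multiset.sum_count_eq_card (s := Finset.univ) (m := R.roots) (by simp)]
          exact Finset.sum_le_sum_of_subset (Finset.subset_univ S)
  refine hcount.trans ?_
  rw [hR]
  refine natDegree_sum_le_of_forall_le _ _ ?_
  intro i _
  have hi1 : (i.1 : ℕ) * G ≤ p := by
    have := Nat.mul_le_mul_right G i.1.2.le
    rw [mul_comm q G, hG] at this
    omega
  have hi2 : (i.2 : ℕ) ≤ K := i.2.2.le
  have d1 : (((X - C c : (ZMod p)[X]) ^ p) ^ (i.2 : ℕ)).natDegree ≤ p * K := by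
    rw [← pow_mul, natDegree_pow, natDegree_X_sub_C, mul_one]
    exact Nat.mul_le_mul_left p hi2
  have d2 : (f ^ (M + i.1 * G)).natDegree ≤ D * (M + p) := by
    rw [natDegree_pow, mul_comm]
    exact Nat.mul_le_mul hD (by omega)
  have := natDegree_mul_le_of_le d1 (natDegree_mul_le_of_le d2 (hdeg i))
  refine this.trans (by omega)

end

section

open Polynomial

set_option maxHeartbeats 1000000 in
lemma bv_branch (p q : ℕ) [Fact p.Prime] (hq : 2 ≤ q) (G : ℕ) (hG : G * q = p - 1)
    (f : (ZMod p)[X]) (hf0 : f ≠ 0) (c : ZMod p) (D : ℕ) (hD : f.natDegree ≤ D) (hD1 : 1 ≤ D)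
    (hcop : Nat.Coprime (f.rootMultiplicity c) q) (ζ : ZMod p)
    (hbig : 30 * q ^ 2 * D ≤ Nat.sqrt p) :
    ((Finset.univ.filter (fun x : ZMod p => f.eval x ≠ 0 ∧ (f.eval x) ^ G = ζ)).card : ℝ) ≤
      p / q + 29 * q * D * Real.sqrt p := by
  have hp : p.Prime := Fact.out
  set K := Nat.sqrt p with hK
  have hK1 : K * K ≤ p := Nat.sqrt_le p
  have hK2 : p < (K + 1) * (K + 1) := Nat.lt_succ_sqrt p
  have hqD : 1 ≤ q ^ 2 * D := Nat.mul_pos (by positivity) hD1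
  have hqD2 : q * D ≤ q ^ 2 * D := by
    apply Nat.mul_le_mul_right; nlinarith
  have hK3 : 30 ≤ K := by nlinarith
  have hLM : 5 * q ^ 3 * D ≤ q * K := by
    calc 5 * q ^ 3 * D ≤ q * (30 * q ^ 2 * D) := by nlinarith [Nat.zero_le (q^3 * D)]
      _ ≤ q * K := Nat.mul_le_mul_left q hbig
  obtain ⟨M, hM⟩ : ∃ M, M + 5 * q ^ 3 * D = q * K := ⟨q * K - 5 * q ^ 3 * D, by omega⟩
  have hpK : 30 * K ≤ p := by nlinarith
  have hqDp : q * D ≤ K := by nlinarith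
  have hGD : D + 1 ≤ G := by
    have : q * (D + 1) ≤ q * G := by
      rw [mul_comm q G, hG]
      have : q ≤ K := by nlinarith
      have : q * (D + 1) ≤ K + K := by nlinarith
      omega
    exact Nat.le_of_mul_le_mul_left this (by omega)
  obtain ⟨H, hH⟩ : ∃ H, H + D = G := ⟨G - D, by omega⟩
  have hqH : q * H + q * D + 1 = p := by
    have : G * q + 1 = p := by have := hp.one_lt; omega
    rw [← this, ← hH]; ring
  have hMp : M ≤ p := by
    have : q ≤ K := by nlinarith
    have : q * K ≤ K * K := Nat.mul_le_mul_right K this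
    omega
  have hdim : M * (H + K + M * D) < q * K * H := by
    have h1 : M ≤ q * K := by omega
    have h2 : M * (K + M * D) ≤ 2 * (q ^ 2 * D) * p := by
      calc M * (K + M * D) ≤ (q * K) * (K + (q * K) * D) := by gcongr
        _ = q * (1 + q * D) * (K * K) := by ring
        _ ≤ q * (2 * (q * D)) * p := by
          have : 1 ≤ q * D := Nat.mul_pos (by omega) hD1
          gcongr; omega
        _ = _ := by ring
    have h3 : 2 * (q ^ 2 * D) * p < (5 * q ^ 3 * D) * H := by
      have : (5 * q ^ 3 * D) * H = (q ^ 2 * D) * (5 * (q * H)) := by ring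
      rw [this]
      have : 2 * p < 5 * (q * H) := by omega
      nlinarith
    calc M * (H + K + M * D) = M * H + M * (K + M * D) := by ring
      _ < M * H + (5 * q ^ 3 * D) * H := Nat.add_lt_add_left (lt_of_le_of_lt h2 h3) _
      _ = q * K * H := by rw [← hM]; ring
  have key := bv_stepanov p q G hG f hf0 c D hD hcop ζ H K M (by omega) (by omega) (by omega)
    hMp hdim
  generalize (Finset.univ.filter (fun x : ZMod p => f.eval x ≠ 0 ∧ (f.eval x) ^ G = ζ)).card = N
    at key ⊢
  have hs : Real.sqrt p ≤ 2 * K := by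
    rw [Real.sqrt_le_left (by positivity)]
    have : p ≤ (2 * K) ^ 2 := by nlinarith
    exact_mod_cast this
  have hs2 : Real.sqrt p * Real.sqrt p = p := Real.mul_self_sqrt (by positivity)
  have hs1 : 1 ≤ Real.sqrt p := by
    rw [Real.one_le_sqrt]; exact_mod_cast hp.one_lt.le
  have hM' : (M : ℝ) + 5 * q ^ 3 * D = q * K := by exact_mod_cast hM
  have key' : (M : ℝ) * N ≤ D * (M + p) + p * K + H := by exact_mod_cast key
  have hbig' : (30 : ℝ) * q ^ 2 * D ≤ K := by exact_mod_cast hbig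
  have hq' : (2 : ℝ) ≤ q := by exact_mod_cast hq
  have hD' : (1 : ℝ) ≤ D := by exact_mod_cast hD1
  have hHp : (H : ℝ) ≤ p := by
    have : H ≤ p := by nlinarith
    exact_mod_cast this
  have hqpos : (0 : ℝ) < q := by linarith
  have hMl : (q : ℝ) * Real.sqrt p ≤ 4 * M := by
    have : (q : ℝ) * (30 * q ^ 2 * D) ≤ q * K := by gcongr
    nlinarith
  have hsp : 0 < Real.sqrt p := by linarith
  have hMpos : (0 : ℝ) < M := by nlinarith
  rw [← mul_le_mul_iff_right₀ hMpos]
  refine key'.trans ?_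
  have e1 : (M : ℝ) * (p / q + 29 * q * D * Real.sqrt p) =
      p * K - p * (5 * q ^ 2 * D) + 29 * q * D * Real.sqrt p * M := by
    have : (K : ℝ) = (M + 5 * q ^ 3 * D) / q := by rw [hM']; field_simp
    rw [this]; field_simp; ring
  rw [e1]
  have e2 : (24 : ℝ) * q * D * Real.sqrt p * M ≥ 6 * q ^ 2 * D * p := by
    calc (24 : ℝ) * q * D * Real.sqrt p * M = 6 * q * D * Real.sqrt p * (4 * M) := by ring
      _ ≥ 6 * q * D * Real.sqrt p * (q * Real.sqrt p) := by gcongr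
      _ = 6 * q ^ 2 * D * (Real.sqrt p * Real.sqrt p) := by ring
      _ = _ := by rw [hs2]
  have e3 : (D : ℝ) * M ≤ q * D * Real.sqrt p * M := by
    have : (1 : ℝ) * 1 ≤ q * Real.sqrt p := by gcongr; linarith
    have h0 : (0 : ℝ) ≤ D * M := by positivity
    nlinarith
  have e4 : (D : ℝ) * p + p ≤ q ^ 2 * D * p := by
    have hp0 : (0 : ℝ) ≤ p := by positivity
    have h4 : (4 : ℝ) ≤ q ^ 2 := by nlinarith
    have : (D : ℝ) + 1 ≤ q ^ 2 * D := by nlinarith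
    nlinarith
  have e5 : 0 ≤ (q : ℝ) * D * Real.sqrt p * M := by positivity
  linarith

theorem bv_weil (p q : ℕ) [Fact p.Prime] (hq : q.Prime) (hqp : q ∣ p - 1)
    (χ : MulChar (ZMod p) ℂ) (hχ1 : χ ≠ 1) (hχq : χ ^ q = 1)
    (f : (ZMod p)[X]) (hf0 : f ≠ 0) (c : ZMod p) (D : ℕ) (hD : f.natDegree ≤ D) (hD1 : 1 ≤ D)
    (hcop : Nat.Coprime (f.rootMultiplicity c) q) :
    ‖∑ x, χ (f.eval x)‖ ≤ 30 * q ^ 2 * D * Real.sqrt p := by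
  classical
  have hp : p.Prime := Fact.out
  have hs2 : Real.sqrt p * Real.sqrt p = p := Real.mul_self_sqrt (by positivity)
  have hq2 : 2 ≤ q := hq.two_le
  have hq' : (2 : ℝ) ≤ q := by exact_mod_cast hq2
  have hD' : (1 : ℝ) ≤ D := by exact_mod_cast hD1
  have hs1 : 1 ≤ Real.sqrt p := by
    rw [Real.one_le_sqrt]; exact_mod_cast hp.one_lt.le
  have hnorm : ∀ a : ZMod p, ‖χ a‖ ≤ 1 := fun a => DirichletCharacter.norm_le_one χ a
  by_cases hbig : Real.sqrt p ≤ 30 * q ^ 2 * D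
  · calc ‖∑ x, χ (f.eval x)‖ ≤ ∑ x : ZMod p, ‖χ (f.eval x)‖ := norm_sum_le _ _
      _ ≤ ∑ x : ZMod p, (1 : ℝ) := Finset.sum_le_sum fun x _ => hnorm _
      _ = p := by simp [ZMod.card]
      _ = Real.sqrt p * Real.sqrt p := hs2.symm
      _ ≤ _ := by gcongr
  push Not at hbig
  have hbig' : 30 * q ^ 2 * D ≤ Nat.sqrt p := by
    rw [Nat.le_sqrt']
    have : ((30 * q ^ 2 * D : ℕ) : ℝ) ≤ Real.sqrt p := by push_cast; exact hbig.le
    have h2 := (Real.le_sqrt (by positivity) (by positivity)).1 this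
    exact_mod_cast h2
  obtain ⟨G, hG⟩ := hqp
  have hG' : G * q = p - 1 := by rw [hG, mul_comm]
  obtain ⟨γ, hγ⟩ := IsCyclic.exists_generator (α := (ZMod p)ˣ)
  set ω : ℂ := χ (γ : ZMod p) with hω
  have hωq : ω ^ q = 1 := by
    rw [hω, ← MulChar.pow_apply_coe, hχq, MulChar.one_apply_coe]
  have hpw : ∀ n : ℕ, χ ((γ ^ n : (ZMod p)ˣ) : ZMod p) = ω ^ n := by
    intro n; rw [Units.val_pow_eq_pow_val, map_pow]
  have hgen : ∀ u : (ZMod p)ˣ, ∃ n : ℕ, γ ^ n = u := by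
    intro u
    exact (mem_powers_iff_mem_zpowers.2 (hγ u))
  have hω1 : ω ≠ 1 := by
    intro h
    apply hχ1
    ext u
    obtain ⟨n, rfl⟩ := hgen u
    rw [hpw, h, MulChar.one_apply_coe, one_pow]
  have hord : orderOf ω = q := by
    have := Fact.mk hq
    exact orderOf_eq_prime hωq hω1
  have hprim : IsPrimitiveRoot ω q := hord ▸ IsPrimitiveRoot.orderOf ω
  have hker : ∀ u : (ZMod p)ˣ, χ (u : ZMod p) = 1 → u ^ G = 1 := by
    intro u hu
    obtain ⟨n, rfl⟩ := hgen u
    rw [hpw] at hu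
    obtain ⟨m, rfl⟩ := (hprim.dvd_of_pow_eq_one n hu)
    rw [← pow_mul]
    have : q * m * G = (p - 1) * m := by rw [← hG']; ring
    rw [this, pow_mul, ZMod.units_pow_card_sub_one_eq_one, one_pow]
  have hker2 : ∀ a b : ZMod p, a ≠ 0 → b ≠ 0 → χ a = χ b → a ^ G = b ^ G := by
    intro a b ha hb hab
    have h1 := hker (Units.mk0 a ha * (Units.mk0 b hb)⁻¹) (by
      have hcb : χ b ≠ 0 := by
        have : IsUnit (χ b) := (IsUnit.mk0 b hb).map χ
        exact this.ne_zero
      have h3 : χ (b⁻¹) * χ b = 1 := by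
        rw [← map_mul, inv_mul_cancel₀ hb, map_one]
      simp only [Units.val_mul, Units.val_mk0, Units.val_inv_eq_inv_val, map_mul]
      rw [hab, mul_comm, h3])
    rw [mul_pow, inv_pow, mul_inv_eq_one] at h1
    have := congrArg (fun u : (ZMod p)ˣ => (u : ZMod p)) h1
    simpa using this
  set Z : Finset ℂ := (Finset.range q).image (fun i => ω ^ i) with hZ
  have hinj : Set.InjOn (fun i => ω ^ i) (Finset.range q : Set ℕ) := by
    intro i hi j hj hij
    simp only [Finset.coe_range, Set.mem_Iio] at hi hj
    exact hprim.pow_inj hi hj hij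
  have hZcard : Z.card = q := by
    rw [hZ, Finset.card_image_of_injOn hinj, Finset.card_range]
  have hZsum : ∑ w ∈ Z, w = 0 := by
    rw [hZ, Finset.sum_image hinj]
    exact hprim.geom_sum_eq_zero hq.one_lt
  have hZnorm : ∀ w ∈ Z, ‖w‖ ≤ 1 := by
    intro w hw
    rw [hZ, Finset.mem_image] at hw
    obtain ⟨i, -, rfl⟩ := hw
    simp only [norm_pow]
    exact pow_le_one₀ (norm_nonneg _) (hnorm _)
  set A := Finset.univ.filter (fun x : ZMod p => f.eval x ≠ 0) with hA
  have hmaps : ∀ x ∈ A, χ (f.eval x) ∈ Z := by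
    intro x hx
    rw [hA, Finset.mem_filter] at hx
    obtain ⟨n, hn⟩ := hgen (Units.mk0 _ hx.2)
    have : χ (f.eval x) = ω ^ n := by rw [← hpw, hn]; simp
    rw [this, hZ, Finset.mem_image]
    refine ⟨n % q, Finset.mem_range.2 (Nat.mod_lt _ hq.pos), ?_⟩
    rw [← hord]; simp [pow_mod_orderOf]
  set E : ℝ := p / q + 29 * q * D * Real.sqrt p with hE
  have hEcount : ∀ w ∈ Z, ((A.filter (fun x => χ (f.eval x) = w)).card : ℝ) ≤ E := by
    intro w _
    rcases Finset.eq_empty_or_nonempty (A.filter (fun x => χ (f.eval x) = w)) with h | ⟨x0, hx0⟩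
    · rw [h]; simp; positivity
    · refine le_trans ?_ (bv_branch p q hq2 G hG' f hf0 c D hD hD1 hcop ((f.eval x0) ^ G) hbig')
      have : (A.filter (fun x => χ (f.eval x) = w)) ⊆ Finset.univ.filter
          (fun x : ZMod p => f.eval x ≠ 0 ∧ (f.eval x) ^ G = (f.eval x0) ^ G) := by
        intro x hx
        simp only [hA, Finset.mem_filter, Finset.mem_univ, true_and] at hx hx0 ⊢
        exact ⟨hx.1, hker2 _ _ hx.1 hx0.1 (hx.2.trans hx0.2.symm)⟩
      exact_mod_cast Finset.card_le_card this
  have hsum1 : ∑ x, χ (f.eval x) =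
      ∑ w ∈ Z, w * ((A.filter (fun x => χ (f.eval x) = w)).card : ℂ) := by
    have h1 : ∑ x, χ (f.eval x) = ∑ x ∈ A, χ (f.eval x) := by
      symm
      apply Finset.sum_subset (Finset.subset_univ A)
      intro x _ hx
      simp only [hA, Finset.mem_filter, Finset.mem_univ, true_and, not_not] at hx
      rw [hx]; exact MulChar.map_zero χ
    rw [h1, ← Finset.sum_fiberwise_of_maps_to hmaps]
    refine Finset.sum_congr rfl fun w _ => ?_
    rw [Finset.sum_congr rfl (g := fun _ => w) (fun x hx => (Finset.mem_filter.1 hx).2)]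
    simp [mul_comm]
  have hsum2 : ∑ x, χ (f.eval x) =
      - ∑ w ∈ Z, w * ((E - ((A.filter (fun x => χ (f.eval x) = w)).card : ℝ) : ℝ) : ℂ) := by
    rw [hsum1]
    simp only [Complex.ofReal_sub, mul_sub, Finset.sum_sub_distrib]
    rw [← Finset.sum_mul, hZsum]
    simp
  have hAcard : (p : ℝ) - D ≤ A.card := by
    have h1 : p ≤ A.card + D := by
      have h2 : (Finset.univ.filter (fun x : ZMod p => ¬ f.eval x ≠ 0)).card ≤ D := by
        refine le_trans ?_ hD
        refine le_trans (Finset.card_le_card ?_) (Polynomial.card_roots' f |> le_trans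
          (Multiset.toFinset_card_le f.roots))
        intro x hx
        simp only [Finset.mem_filter, Finset.mem_univ, true_and, not_not] at hx
        simp [hf0, hx]
      have h3 : A.card + (Finset.univ.filter (fun x : ZMod p => ¬ f.eval x ≠ 0)).card = p := by
        have h4 := Finset.card_filter_add_card_filter_not (s := (Finset.univ : Finset (ZMod p)))
          (fun x : ZMod p => f.eval x ≠ 0)
        rw [Finset.card_univ, ZMod.card] at h4
        convert h4
      omega
    have : (p : ℝ) ≤ A.card + D := by exact_mod_cast h1
    linarith
  have hcards : ∑ w ∈ Z, ((A.filter (fun x => χ (f.eval x) = w)).card : ℝ) = A.card := by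
    rw [Finset.card_eq_sum_card_fiberwise hmaps]; push_cast; rfl
  rw [hsum2, norm_neg]
  calc _ ≤ ∑ w ∈ Z, ‖w * ((E - ((A.filter (fun x => χ (f.eval x) = w)).card : ℝ) : ℝ) : ℂ)‖ :=
        norm_sum_le _ _
    _ ≤ ∑ w ∈ Z, (E - ((A.filter (fun x => χ (f.eval x) = w)).card : ℝ)) := by
        refine Finset.sum_le_sum fun w hw => ?_
        rw [norm_mul, Complex.norm_real, Real.norm_eq_abs,
          abs_of_nonneg (sub_nonneg.2 (hEcount w hw))]
        exact mul_le_of_le_one_left (sub_nonneg.2 (hEcount w hw)) (hZnorm w hw)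
    _ = q * E - A.card := by
        rw [Finset.sum_sub_distrib, hcards]; simp [hZcard]
    _ ≤ q * E - (p - D) := by linarith
    _ = 29 * q ^ 2 * D * Real.sqrt p + D := by
        rw [hE]; field_simp; ring
    _ ≤ _ := by
        have : (1 : ℝ) ≤ q ^ 2 * Real.sqrt p := by nlinarith
        nlinarith

end

section

open Polynomial

lemma bv_conj (p q : ℕ) [Fact p.Prime] (hq : q.Prime) (χ : MulChar (ZMod p) ℂ) (hχq : χ ^ q = 1)
    (a : ZMod p) : (starRingEnd ℂ) (χ a) = χ a ^ (q - 1) := by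
  have hq2 := hq.two_le
  by_cases ha : a = 0
  · rw [ha, MulChar.map_zero, map_zero, zero_pow (by omega)]
  · have h1 : χ a ^ q = 1 := by
      have : (χ ^ q) a = 1 := by
        rw [hχq]; exact MulChar.one_apply (IsUnit.mk0 a ha)
      rwa [MulChar.pow_apply' χ (by omega)] at this
    have h2 : ‖χ a‖ = 1 := Complex.norm_eq_one_of_pow_eq_one h1 (by omega)
    have h3 : χ a * (starRingEnd ℂ) (χ a) = 1 := by
      rw [Complex.mul_conj, Complex.normSq_eq_norm_sq, h2]; simp
    calc (starRingEnd ℂ) (χ a) = χ a ^ q * (starRingEnd ℂ) (χ a) := by rw [h1, one_mul]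
      _ = χ a ^ (q - 1) * (χ a * (starRingEnd ℂ) (χ a)) := by
          rw [← mul_assoc, ← pow_succ]; congr 2; omega
      _ = _ := by rw [h3, mul_one]

/-- exponents. -/
def bvExp (q r : ℕ) : Fin r ⊕ Fin r → ℕ := Sum.elim (fun _ => 1) (fun _ => q - 1)

noncomputable def bvPoly (p q r B : ℕ) (t : Fin r ⊕ Fin r → Fin B) : (ZMod p)[X] :=
  ∏ i, (X - C (-((t i : ℕ) : ZMod p))) ^ bvExp q r i

lemma bvPoly_ne (p q r B : ℕ) [Fact p.Prime] (t : Fin r ⊕ Fin r → Fin B) :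
    bvPoly p q r B t ≠ 0 := by
  unfold bvPoly
  exact Finset.prod_ne_zero_iff.2 fun i _ => pow_ne_zero _ (X_sub_C_ne_zero _)

lemma bvPoly_natDegree (p q r B : ℕ) [Fact p.Prime] (hq : 2 ≤ q) (t : Fin r ⊕ Fin r → Fin B) :
    (bvPoly p q r B t).natDegree ≤ 2 * r * q := by
  unfold bvPoly
  refine (natDegree_prod_le _ _).trans ?_
  have : ∀ i ∈ (Finset.univ : Finset (Fin r ⊕ Fin r)),
      ((X - C (-((t i : ℕ) : ZMod p))) ^ bvExp q r i).natDegree ≤ q := by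
    intro i _
    rw [natDegree_pow, natDegree_X_sub_C, mul_one]
    rcases i with i | i <;> simp [bvExp] <;> omega
  refine (Finset.sum_le_card_nsmul _ _ _ this).trans ?_
  simp
  apply le_of_eq; ring

lemma bvPoly_mult (p q r B : ℕ) [Fact p.Prime] (hq : 2 ≤ q) (hB : B ≤ p)
    (t : Fin r ⊕ Fin r → Fin B) (i : Fin r ⊕ Fin r) (hi : ∀ j, j ≠ i → t j ≠ t i) :
    (bvPoly p q r B t).rootMultiplicity (-((t i : ℕ) : ZMod p)) = bvExp q r i := by
  classical
  have h0 := bvPoly_ne p q r B t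
  have h1 : bvPoly p q r B t = (X - C (-((t i : ℕ) : ZMod p))) ^ bvExp q r i *
      ∏ j ∈ Finset.univ.erase i, (X - C (-((t j : ℕ) : ZMod p))) ^ bvExp q r j := by
    unfold bvPoly
    exact (Finset.mul_prod_erase _ _ (Finset.mem_univ i)).symm
  rw [h1] at h0 ⊢
  rw [rootMultiplicity_mul h0, rootMultiplicity_X_sub_C_pow, rootMultiplicity_eq_zero, add_zero]
  rw [IsRoot, eval_prod, Finset.prod_eq_zero_iff]
  rintro ⟨j, hj, hj0⟩
  rw [Finset.mem_erase] at hj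
  rw [eval_pow] at hj0
  have h2 := eq_zero_of_pow_eq_zero hj0
  simp only [eval_sub, eval_X, eval_C] at h2
  have h3 : ((t i : ℕ) : ZMod p) = ((t j : ℕ) : ZMod p) := by linear_combination -h2
  rw [ZMod.natCast_eq_natCast_iff] at h3
  have h4 := Nat.ModEq.eq_of_lt_of_lt h3 (lt_of_lt_of_le (t i).2 hB) (lt_of_lt_of_le (t j).2 hB)
  exact hi j hj.1 (Fin.ext h4.symm)

lemma bvExp_coprime (q r : ℕ) (hq : 2 ≤ q) (i : Fin r ⊕ Fin r) : Nat.Coprime (bvExp q r i) q := by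
  rcases i with i | i
  · simp [bvExp]
  · simp only [bvExp, Sum.elim_inr]
    obtain ⟨m, rfl⟩ : ∃ m, q = m + 1 := ⟨q - 1, by omega⟩
    simp

lemma bv_bad_count (r B : ℕ) (hr : 1 ≤ r) :
    (Finset.univ.filter (fun t : Fin r ⊕ Fin r → Fin B =>
      ∀ i, ∃ j, j ≠ i ∧ t j = t i)).card ≤ r ^ (2 * r) * B ^ r := by
  have hcard : Fintype.card ((Fin r ⊕ Fin r → Fin r) × (Fin r → Fin B)) = r ^ (2 * r) * B ^ r := by
    simp [two_mul]
  rw [← hcard, ← Finset.card_univ]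
  refine le_trans (Finset.card_le_card ?_) (Finset.card_image_le
    (f := fun uw : (Fin r ⊕ Fin r → Fin r) × (Fin r → Fin B) => fun i => uw.2 (uw.1 i)))
  intro t ht
  rw [Finset.mem_filter] at ht
  replace ht := ht.2
  set s := Finset.univ.image t with hs
  have hle : s.card ≤ r := by
    have h1 := Finset.mul_card_image_le_card (f := t) (s := Finset.univ) 2 (by
      intro a ha
      rw [Finset.mem_image] at ha
      obtain ⟨i, -, rfl⟩ := ha
      obtain ⟨j, hj1, hj2⟩ := ht i
      have : ({i, j} : Finset _) ⊆ Finset.univ.filter (fun x => t x = t i) := by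
        intro x hx
        simp only [Finset.mem_insert, Finset.mem_singleton] at hx
        rcases hx with rfl | rfl <;> simp [hj2]
      refine le_trans ?_ (Finset.card_le_card this)
      rw [Finset.card_pair hj1.symm])
    rw [← hs] at h1
    simp at h1
    omega
  let e := s.equivFin
  have hmem : ∀ i, t i ∈ s := fun i => Finset.mem_image_of_mem t (Finset.mem_univ i)
  rw [Finset.mem_image]
  refine ⟨(fun i => Fin.castLE hle (e ⟨t i, hmem i⟩),
    fun k => if h : (k : ℕ) < s.card then (e.symm ⟨k, h⟩ : Fin B) else t (Sum.inl ⟨0, hr⟩)),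
    Finset.mem_univ _, ?_⟩
  funext i
  simp

theorem bv_moment (p q r B : ℕ) [Fact p.Prime] (hq : q.Prime) (hqp : q ∣ p - 1)
    (χ : MulChar (ZMod p) ℂ) (hχ1 : χ ≠ 1) (hχq : χ ^ q = 1) (hr : 1 ≤ r) (hB : B ≤ p) :
    ∑ x : ZMod p, ‖∑ b : Fin B, χ (x + ((b : ℕ) : ZMod p))‖ ^ (2 * r) ≤
      r ^ (2 * r) * B ^ r * p + B ^ (2 * r) * (60 * r * q ^ 3 * Real.sqrt p) := by
  classical
  have hq2 := hq.two_le
  have hexp : ∀ x : ZMod p, ((‖∑ b : Fin B, χ (x + ((b : ℕ) : ZMod p))‖ ^ (2 * r) : ℝ) : ℂ) =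
      ∑ t : Fin r ⊕ Fin r → Fin B, χ ((bvPoly p q r B t).eval x) := by
    intro x
    set z := ∑ b : Fin B, χ (x + ((b : ℕ) : ZMod p)) with hz
    have h1 : ((‖z‖ ^ (2 * r) : ℝ) : ℂ) = z ^ r * ((starRingEnd ℂ) z) ^ r := by
      rw [← mul_pow, Complex.mul_conj, Complex.normSq_eq_norm_sq, pow_mul]; push_cast; rfl
    have h2 : (starRingEnd ℂ) z = ∑ b : Fin B, χ (x + ((b : ℕ) : ZMod p)) ^ (q - 1) := by
      rw [hz, map_sum]
      exact Finset.sum_congr rfl fun b _ => bv_conj p q hq χ hχq _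
    have h3 : z ^ r * ((starRingEnd ℂ) z) ^ r =
        ∏ i : Fin r ⊕ Fin r, ∑ b : Fin B, χ (x + ((b : ℕ) : ZMod p)) ^ bvExp q r i := by
      rw [Fintype.prod_sum_type, h2]
      simp [bvExp, hz]
    rw [h1, h3, Finset.prod_univ_sum, Fintype.piFinset_univ]
    refine Finset.sum_congr rfl fun t _ => ?_
    rw [bvPoly, eval_prod, map_prod]
    refine Finset.prod_congr rfl fun i _ => ?_
    rw [eval_pow, map_pow]
    simp
  have hnorm : ∀ a : ZMod p, ‖χ a‖ ≤ 1 := fun a => DirichletCharacter.norm_le_one χ a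
  have h1 : ∑ x : ZMod p, ‖∑ b : Fin B, χ (x + ((b : ℕ) : ZMod p))‖ ^ (2 * r) ≤
      ∑ t : Fin r ⊕ Fin r → Fin B, ‖∑ x, χ ((bvPoly p q r B t).eval x)‖ := by
    have h2 : ((∑ x : ZMod p, ‖∑ b : Fin B, χ (x + ((b : ℕ) : ZMod p))‖ ^ (2 * r) : ℝ) : ℂ) =
        ∑ t : Fin r ⊕ Fin r → Fin B, ∑ x, χ ((bvPoly p q r B t).eval x) := by
      rw [Finset.sum_comm]
      rw [Complex.ofReal_sum]
      exact Finset.sum_congr rfl fun x _ => hexp x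
    calc _ ≤ |∑ x : ZMod p, ‖∑ b : Fin B, χ (x + ((b : ℕ) : ZMod p))‖ ^ (2 * r)| := le_abs_self _
      _ = ‖((∑ x : ZMod p, ‖∑ b : Fin B, χ (x + ((b : ℕ) : ZMod p))‖ ^ (2 * r) : ℝ) : ℂ)‖ := by
          rw [Complex.norm_real, Real.norm_eq_abs]
      _ ≤ _ := by rw [h2]; exact norm_sum_le _ _
  refine h1.trans ?_
  rw [← Finset.sum_filter_add_sum_filter_not Finset.univ
    (fun t : Fin r ⊕ Fin r → Fin B => ∀ i, ∃ j, j ≠ i ∧ t j = t i)]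
  refine add_le_add ?_ ?_
  · refine (Finset.sum_le_card_nsmul _ _ (p : ℝ) ?_).trans ?_
    · intro t _
      calc ‖∑ x, χ ((bvPoly p q r B t).eval x)‖
          ≤ ∑ x : ZMod p, ‖χ ((bvPoly p q r B t).eval x)‖ := norm_sum_le _ _
        _ ≤ ∑ x : ZMod p, (1 : ℝ) := Finset.sum_le_sum fun x _ => hnorm _
        _ = p := by simp [ZMod.card]
    · rw [nsmul_eq_mul]
      gcongr
      exact_mod_cast bv_bad_count r B hr
  · refine (Finset.sum_le_card_nsmul _ _ (60 * r * q ^ 3 * Real.sqrt p) ?_).trans ?_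
    · intro t ht
      rw [Finset.mem_filter] at ht
      have ht2 := ht.2
      push Not at ht2
      obtain ⟨i, hi⟩ := ht2
      have := bv_weil p q hq hqp χ hχ1 hχq (bvPoly p q r B t) (bvPoly_ne p q r B t)
        (-((t i : ℕ) : ZMod p)) (2 * r * q) (bvPoly_natDegree p q r B hq2 t)
        (Nat.mul_pos (by omega) (by omega)) (by
          rw [bvPoly_mult p q r B hq2 hB t i hi]; exact bvExp_coprime q r hq2 i)
      refine this.trans (le_of_eq ?_)
      push_cast; ring
    · rw [nsmul_eq_mul]
      gcongr
      have : (Finset.univ.filter (fun t : Fin r ⊕ Fin r → Fin B =>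
        ¬ ∀ i, ∃ j, j ≠ i ∧ t j = t i)).card ≤ B ^ (2 * r) := by
        refine (Finset.card_le_univ _).trans ?_
        simp [two_mul]
      exact_mod_cast this

end

section

lemma bv_shift (g : ℕ → ℂ) (hg : ∀ n, ‖g n‖ ≤ 1) (N k : ℕ) :
    ‖∑ n ∈ Finset.range N, g n - ∑ n ∈ Finset.range N, g (n + k)‖ ≤ 2 * k := by
  induction k with
  | zero => simp
  | succ k ih =>
    have h1 : ∑ n ∈ Finset.range N, g (n + k) - ∑ n ∈ Finset.range N, g (n + (k + 1)) =
        g k - g (N + k) := by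
      have h2 := Finset.sum_range_sub (fun n => g (n + k)) N
      rw [← Finset.sum_sub_distrib]
      simp only [zero_add] at h2
      rw [← neg_sub (g (N + k)) (g k), ← h2, ← Finset.sum_neg_distrib]
      refine Finset.sum_congr rfl fun n _ => ?_
      rw [show n + (k + 1) = n + 1 + k by ring]; ring
    calc _ = ‖(∑ n ∈ Finset.range N, g n - ∑ n ∈ Finset.range N, g (n + k)) +
          (g k - g (N + k))‖ := by rw [← h1]; congr 1; ring
      _ ≤ 2 * k + (1 + 1) := (norm_add_le _ _).trans (add_le_add ih
          ((norm_sub_le _ _).trans (add_le_add (hg _) (hg _))))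
      _ = _ := by push_cast; ring

theorem bv_burgess (p q r B A A0 N : ℕ) [Fact p.Prime] (hq : q.Prime) (hqp : q ∣ p - 1)
    (χ : MulChar (ZMod p) ℂ) (hχ1 : χ ≠ 1) (hχq : χ ^ q = 1) (hr : 1 ≤ r) (hB : B ≤ p)
    (hB1 : 1 ≤ B) (hA0 : 1 ≤ A0) (hAN : A * N < p) (hAp : A < p) (η : ℝ) (hη : 0 < η)
    (P : Finset ℕ) (hP : ∀ a ∈ P, a.Prime ∧ A0 ≤ a ∧ a ≤ A) (hP1 : P.Nonempty)
    (hmain : (r : ℝ) ^ (2 * r) * B ^ r * p + B ^ (2 * r) * (60 * r * q ^ 3 * Real.sqrt p) ≤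
      η ^ (2 * r) * B ^ (2 * r) * (P.card * N)) :
    ‖∑ n ∈ Finset.range N, χ ((n + 1 : ℕ) : ZMod p)‖ ≤ η * N + N / A0 + 2 * A * B := by
  classical
  have hp : p.Prime := Fact.out
  have hnorm : ∀ a : ZMod p, ‖χ a‖ ≤ 1 := fun a => DirichletCharacter.norm_le_one χ a
  set S := ∑ n ∈ Finset.range N, χ ((n + 1 : ℕ) : ZMod p) with hS
  set T : ZMod p → ℝ := fun x => ‖∑ b : Fin B, χ (x + ((b : ℕ) : ZMod p))‖ with hT
  have hT0 : ∀ x, 0 ≤ T x := fun x => norm_nonneg _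
  have hTB : ∀ x, T x ≤ B := by
    intro x
    calc T x ≤ ∑ b : Fin B, ‖χ (x + ((b : ℕ) : ZMod p))‖ := norm_sum_le _ _
      _ ≤ ∑ b : Fin B, (1 : ℝ) := Finset.sum_le_sum fun _ _ => hnorm _
      _ = B := by simp
  have hane : ∀ a ∈ P, ((a : ℕ) : ZMod p) ≠ 0 := by
    intro a ha h
    rw [ZMod.natCast_eq_zero_iff] at h
    have := Nat.le_of_dvd (hP a ha).1.pos h
    have := (hP a ha).2.2
    omega
  let pt : ℕ × ℕ → ZMod p := fun an => ((an.2 + 1 : ℕ) : ZMod p) * ((an.1 : ℕ) : ZMod p)⁻¹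
  -- single shift
  have hsingle : ∀ a ∈ P, (B : ℝ) * ‖S‖ ≤
      ∑ n ∈ Finset.range N, T (pt (a, n)) + B * (2 * (A * B)) := by
    intro a ha
    have h1 : ∀ b : Fin B, ‖S - ∑ n ∈ Finset.range N, χ ((n + 1 + a * b : ℕ) : ZMod p)‖ ≤
        2 * (A * B) := by
      intro b
      have h2 := bv_shift (fun n => χ ((n + 1 : ℕ) : ZMod p)) (fun n => hnorm _) N (a * b)
      have h3 : ∀ n, n + a * (b : ℕ) + 1 = n + 1 + a * b := fun n => by ring
      simp only [h3] at h2
      refine h2.trans ?_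
      have h4 : a * (b : ℕ) ≤ A * B := Nat.mul_le_mul (hP a ha).2.2 b.2.le
      have : ((a * (b : ℕ) : ℕ) : ℝ) ≤ A * B := by exact_mod_cast h4
      linarith
    have h5 : (B : ℂ) * S = ∑ b : Fin B, (S - ∑ n ∈ Finset.range N,
        χ ((n + 1 + a * b : ℕ) : ZMod p)) + ∑ n ∈ Finset.range N, ∑ b : Fin B,
        χ ((n + 1 + a * b : ℕ) : ZMod p) := by
      rw [Finset.sum_comm, ← Finset.sum_add_distrib]
      simp
    have h6 : ∀ n, ‖∑ b : Fin B, χ ((n + 1 + a * b : ℕ) : ZMod p)‖ ≤ T (pt (a, n)) := by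
      intro n
      have h7 : ∀ b : Fin B, χ ((n + 1 + a * b : ℕ) : ZMod p) =
          χ (a : ZMod p) * χ (pt (a, n) + ((b : ℕ) : ZMod p)) := by
        intro b
        rw [← map_mul]
        congr 1
        have := hane a ha
        simp only [pt]
        push_cast
        field_simp
      simp only [h7]
      rw [← Finset.mul_sum, norm_mul]
      exact mul_le_of_le_one_left (norm_nonneg _) (hnorm _)
    calc (B : ℝ) * ‖S‖ = ‖(B : ℂ) * S‖ := by simp
      _ ≤ ∑ b : Fin B, (2 * ((A : ℝ) * B)) + ∑ n ∈ Finset.range N, T (pt (a, n)) := by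
          rw [h5]
          refine (norm_add_le _ _).trans (add_le_add ?_ ?_)
          · exact (norm_sum_le _ _).trans (Finset.sum_le_sum fun b _ => h1 b)
          · exact (norm_sum_le _ _).trans (Finset.sum_le_sum fun n _ => h6 n)
      _ = _ := by simp; ring
  set PR := P ×ˢ Finset.range N with hPR
  have hall : (P.card : ℝ) * (B * ‖S‖) ≤ ∑ an ∈ PR, T (pt an) +
      P.card * (B * (2 * (A * B))) := by
    calc (P.card : ℝ) * (B * ‖S‖) = ∑ a ∈ P, (B * ‖S‖) := by simp
      _ ≤ ∑ a ∈ P, (∑ n ∈ Finset.range N, T (pt (a, n)) + B * (2 * (A * B))) :=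
          Finset.sum_le_sum hsingle
      _ = _ := by
          rw [Finset.sum_add_distrib, hPR, Finset.sum_product]; simp
  have hdiv : ∑ an ∈ PR.filter (fun an => an.1 ∣ an.2 + 1), T (pt an) ≤
      P.card * (N / A0) * B := by
    have hc : ((PR.filter (fun an => an.1 ∣ an.2 + 1)).card : ℝ) ≤ P.card * (N / A0) := by
      have h1 : (PR.filter (fun an => an.1 ∣ an.2 + 1)).card = ∑ a ∈ P, N / a := by
        rw [hPR, Finset.card_filter, Finset.sum_product]
        refine Finset.sum_congr rfl fun a _ => ?_
        rw [← Finset.card_filter]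
        exact Nat.card_multiples N a
      rw [h1]
      push_cast
      calc ∑ a ∈ P, ((N / a : ℕ) : ℝ) ≤ ∑ a ∈ P, (N : ℝ) / A0 := by
            refine Finset.sum_le_sum fun a ha => ?_
            refine Nat.cast_div_le.trans ?_
            have h2 := (hP a ha).2.1
            gcongr
        _ = _ := by simp
    calc _ ≤ ∑ an ∈ PR.filter (fun an => an.1 ∣ an.2 + 1), (B : ℝ) :=
          Finset.sum_le_sum fun an _ => hTB _
      _ = ((PR.filter (fun an => an.1 ∣ an.2 + 1)).card : ℝ) * B := by simp
      _ ≤ _ := by gcongr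
  set P' := PR.filter (fun an => ¬ an.1 ∣ an.2 + 1) with hP'
  have hinj : Set.InjOn pt (P' : Set (ℕ × ℕ)) := by
    rintro ⟨a, n⟩ h1 ⟨a', n'⟩ h2 h
    simp only [hP', hPR, Finset.coe_filter, Finset.mem_product, Finset.mem_range,
      Set.mem_ofPred_eq] at h1 h2
    obtain ⟨⟨ha, hn⟩, hd⟩ := h1
    obtain ⟨⟨ha', hn'⟩, hd'⟩ := h2
    simp only [pt] at h
    have e1 := hane a ha
    have e2 := hane a' ha'
    have e3 : (((n + 1) * a' : ℕ) : ZMod p) = (((n' + 1) * a : ℕ) : ZMod p) := by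
      push_cast at h ⊢
      field_simp at h
      linear_combination h
    have bd : ∀ m b, m < N → b ∈ P → (m + 1) * b < p := by
      intro m b hm hb
      calc (m + 1) * b ≤ N * A := Nat.mul_le_mul hm (hP b hb).2.2
        _ < p := by rw [mul_comm]; exact hAN
    rw [ZMod.natCast_eq_natCast_iff] at e3
    have e4 := Nat.ModEq.eq_of_lt_of_lt e3 (bd n a' hn ha') (bd n' a hn' ha)
    have e5 : a ∣ (n + 1) * a' := e4 ▸ Dvd.intro_left _ rfl
    have e6 : a ∣ a' := ((hP a ha).1.dvd_mul.1 e5).resolve_left hd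
    have e7 : a = a' := (Nat.prime_dvd_prime_iff_eq (hP a ha).1 (hP a' ha').1).1 e6
    subst e7
    have e8 := Nat.eq_of_mul_eq_mul_right (hP a ha).1.pos e4
    simp at e8
    rw [e8]
  have hcardP' : (P'.card : ℝ) ≤ P.card * N := by
    have : P'.card ≤ P.card * N := by
      refine (Finset.card_filter_le _ _).trans ?_
      rw [hPR, Finset.card_product, Finset.card_range]
    exact_mod_cast this
  set Y := ∑ an ∈ P', T (pt an) with hY
  have hY0 : 0 ≤ Y := Finset.sum_nonneg fun _ _ => hT0 _
  have hmom := bv_moment p q r B hq hqp χ hχ1 hχq hr hB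
  have hY2 : Y ^ (2 * r) ≤ (P'.card : ℝ) ^ (2 * r - 1) * ∑ x : ZMod p, T x ^ (2 * r) := by
    have h1 : Y ^ (2 * r) ≤ (P'.card : ℝ) ^ (2 * r - 1) * ∑ an ∈ P', T (pt an) ^ (2 * r) := by
      have h3 := pow_sum_div_card_le_sum_pow (s := P') (f := fun an => T (pt an))
        (fun _ _ => hT0 _) (2 * r - 1)
      rw [show 2 * r - 1 + 1 = 2 * r by omega] at h3
      rcases Finset.eq_empty_or_nonempty P' with h0 | h0
      · rw [hY, h0, Finset.sum_empty, Finset.sum_empty, mul_zero, zero_pow (by omega)]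
      · have : (0 : ℝ) < (P'.card : ℝ) ^ (2 * r - 1) := by
          have := h0.card_pos
          positivity
        rw [div_le_iff₀ this] at h3
        linarith
    refine h1.trans ?_
    gcongr
    rw [← Finset.sum_image (f := fun x => T x ^ (2 * r)) hinj]
    exact Finset.sum_le_sum_of_subset_of_nonneg (Finset.subset_univ _)
      (fun x _ _ => pow_nonneg (hT0 x) _)
  have hPc : (0 : ℝ) < P.card := by exact_mod_cast hP1.card_pos
  have hYle : Y ≤ η * B * (P.card * N) := by
    refine le_of_pow_le_pow_left₀ (n := 2 * r) (by omega) (by positivity) ?_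
    calc Y ^ (2 * r) ≤ (P'.card : ℝ) ^ (2 * r - 1) * ∑ x : ZMod p, T x ^ (2 * r) := hY2
      _ ≤ (P.card * N : ℝ) ^ (2 * r - 1) * (η ^ (2 * r) * B ^ (2 * r) * (P.card * N)) := by
          gcongr
          exact hmom.trans hmain
      _ = η ^ (2 * r) * B ^ (2 * r) * (P.card * N : ℝ) ^ (2 * r - 1 + 1) := by
          rw [pow_succ]; ring
      _ = _ := by
          rw [show 2 * r - 1 + 1 = 2 * r by omega]; ring
  have hsplit := Finset.sum_filter_add_sum_filter_not PR (fun an => an.1 ∣ an.2 + 1)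
    (fun an => T (pt an))
  have hBpos : (0 : ℝ) < B := by exact_mod_cast hB1
  have hfin : (P.card : ℝ) * (B * ‖S‖) ≤ P.card * (B * (η * N + N / A0 + 2 * A * B)) := by
    refine hall.trans ?_
    rw [← hsplit]
    have : (P.card : ℝ) * (B * (η * N + N / A0 + 2 * A * B)) =
        (P.card * (N / A0) * B + η * B * (P.card * N)) + P.card * (B * (2 * (A * B))) := by ring
    rw [this]
    gcongr
  have h8 := le_of_mul_le_mul_left hfin hPc
  exact le_of_mul_le_mul_left h8 hBpos

end

section

open ArithmeticFunction in
theorem bv_mertens1 (N : ℕ) (hN : 1 ≤ N) :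
    Real.log N - 1 ≤ ∑ d ∈ Finset.Ioc 0 N, vonMangoldt d / d ∧
    ∑ d ∈ Finset.Ioc 0 N, vonMangoldt d / d ≤ Real.log N + 6 := by
  have hNpos : (0:ℝ) < N := by exact_mod_cast hN
  have hfac : ∑ d ∈ Finset.Ioc 0 N, vonMangoldt d * ((N / d : ℕ) : ℝ) = Real.log (N.factorial) := by
    rw [← sum_Ioc_mul_zeta_eq_sum, vonMangoldt_mul_zeta]
    clear hN hNpos
    induction N with
    | zero => simp
    | succ n ih =>
      rw [Finset.sum_Ioc_succ_top (by omega), ih, Nat.factorial_succ, Nat.cast_mul, Real.log_mul]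
      · simp [log_apply, add_comm]
      · positivity
      · positivity
  have hup : Real.log N.factorial ≤ N * Real.log N := by
    rw [← Real.log_pow]
    apply Real.log_le_log (by positivity)
    exact_mod_cast Nat.factorial_le_pow N
  have hlo : N * Real.log N - N ≤ Real.log N.factorial := by
    have h := Real.pow_div_factorial_le_exp (x := N) hNpos.le N
    have h2 := Real.log_le_log (by positivity) h
    rw [Real.log_exp, Real.log_div (by positivity) (by positivity), Real.log_pow] at h2
    linarith
  have hpsi : ∑ d ∈ Finset.Ioc 0 N, vonMangoldt d ≤ 6 * N := by
    have h := Chebyshev.psi_le_const_mul_self (x := N) hNpos.le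
    rw [Chebyshev.psi, Nat.floor_natCast] at h
    have h4 : Real.log 4 ≤ 2 := by
      rw [show (4:ℝ) = 2 ^ 2 by norm_num, Real.log_pow]
      have := Real.log_two_lt_d9
      push_cast; linarith
    nlinarith
  constructor
  · have h1 : Real.log N.factorial ≤ N * ∑ d ∈ Finset.Ioc 0 N, vonMangoldt d / d := by
      rw [← hfac, Finset.mul_sum]
      apply Finset.sum_le_sum
      intro d hd
      have := Nat.cast_div_le (α := ℝ) (m := N) (n := d)
      have h0 : 0 ≤ vonMangoldt d := vonMangoldt_nonneg
      calc _ ≤ vonMangoldt d * ((N:ℝ) / d) := by gcongr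
        _ = _ := by ring
    have : N * (Real.log N - 1) ≤ N * ∑ d ∈ Finset.Ioc 0 N, vonMangoldt d / d := by linarith
    exact le_of_mul_le_mul_left this hNpos
  · have h1 : N * ∑ d ∈ Finset.Ioc 0 N, vonMangoldt d / d - ∑ d ∈ Finset.Ioc 0 N, vonMangoldt d
        ≤ Real.log N.factorial := by
      rw [← hfac, Finset.mul_sum, ← Finset.sum_sub_distrib]
      apply Finset.sum_le_sum
      intro d hd
      have hd0 : 0 < d := (Finset.mem_Ioc.1 hd).1
      have := Nat.lt_mul_div_succ N hd0
      have h3 : (N:ℝ) / d ≤ (N / d : ℕ) + 1 := by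
        rw [div_le_iff₀ (by exact_mod_cast hd0)]
        have h7 : (N:ℝ) ≤ d * ((N / d : ℕ) + 1) := by exact_mod_cast this.le
        linarith
      have h0 : 0 ≤ vonMangoldt d := vonMangoldt_nonneg
      calc _ = vonMangoldt d * ((N:ℝ) / d - 1) := by ring
        _ ≤ _ := by
          apply mul_le_mul_of_nonneg_left _ h0
          linarith
    have : N * ∑ d ∈ Finset.Ioc 0 N, vonMangoldt d / d ≤ N * (Real.log N + 6) := by linarith
    exact le_of_mul_le_mul_left this hNpos

open ArithmeticFunction in
theorem bv_block (z w : ℝ) (hz : 1 < z) (hzw : z ≤ w) :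
    ∑ l ∈ (Finset.Ioc ⌊z⌋₊ ⌊w⌋₊).filter Nat.Prime, (1:ℝ) / l ≤
      (Real.log w - Real.log z + 8) / Real.log z := by
  have hlz := Real.log_pos hz
  have hfz : 1 ≤ ⌊z⌋₊ := Nat.le_floor (by exact_mod_cast hz.le)
  have hfzw : ⌊z⌋₊ ≤ ⌊w⌋₊ := Nat.floor_mono hzw
  have hfw : 1 ≤ ⌊w⌋₊ := hfz.trans hfzw
  rw [le_div_iff₀ hlz, Finset.sum_mul]
  have h1 := (bv_mertens1 _ hfz).1
  have h2 := (bv_mertens1 _ hfw).2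
  have h3 : Real.log ⌊w⌋₊ ≤ Real.log w :=
    Real.log_le_log (by exact_mod_cast hfw) (Nat.floor_le (by linarith))
  have h4 : Real.log z - 1 ≤ Real.log ⌊z⌋₊ := by
    have : Real.log z ≤ Real.log (2 * ⌊z⌋₊) := by
      apply Real.log_le_log (by linarith)
      have := Nat.lt_floor_add_one z
      have : (1:ℝ) ≤ ⌊z⌋₊ := by exact_mod_cast hfz
      linarith
    rw [Real.log_mul (by norm_num) (by positivity)] at this
    have := Real.log_two_lt_d9
    linarith
  have h5 : ∑ l ∈ (Finset.Ioc ⌊z⌋₊ ⌊w⌋₊).filter Nat.Prime, (1:ℝ) / l * Real.log z ≤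
      ∑ d ∈ Finset.Ioc ⌊z⌋₊ ⌊w⌋₊, vonMangoldt d / d := by
    calc _ ≤ ∑ l ∈ (Finset.Ioc ⌊z⌋₊ ⌊w⌋₊).filter Nat.Prime, vonMangoldt l / l := by
          apply Finset.sum_le_sum
          intro l hl
          obtain ⟨hl1, hl2⟩ := Finset.mem_filter.1 hl
          have hl3 : z < l := (Nat.floor_lt (by linarith)).1 (Finset.mem_Ioc.1 hl1).1
          rw [vonMangoldt_apply_prime hl2]
          have : Real.log z ≤ Real.log l := Real.log_le_log (by linarith) hl3.le
          rw [one_div_mul_eq_div]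
          gcongr
      _ ≤ _ := by
          apply Finset.sum_le_sum_of_subset_of_nonneg (Finset.filter_subset _ _)
          intro i _ _
          exact div_nonneg vonMangoldt_nonneg (by positivity)
  have h6 := Finset.sum_Ioc_consecutive (fun d : ℕ => (vonMangoldt d / d : ℝ)) (Nat.zero_le _) hfzw
  linarith

theorem bv_chain (y lam : ℝ) (hy : 1 < y) (hlam : 1 ≤ lam) (k : ℕ) :
    ∑ l ∈ (Finset.Ioc ⌊y⌋₊ ⌊y ^ (lam ^ k)⌋₊).filter Nat.Prime, (1:ℝ) / l ≤
      k * ((lam - 1) + 8 / Real.log y) := by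
  have hly := Real.log_pos hy
  have hle : ∀ i : ℕ, y ≤ y ^ (lam ^ i) := fun i => by
    conv_lhs => rw [← Real.rpow_one y]
    exact Real.rpow_le_rpow_of_exponent_le hy.le (one_le_pow₀ hlam)
  induction k with
  | zero => simp
  | succ k ih =>
    have hstep : y ^ (lam ^ k) ≤ y ^ (lam ^ (k+1)) :=
      Real.rpow_le_rpow_of_exponent_le hy.le (pow_le_pow_right₀ hlam (by omega))
    have hb := bv_block _ _ (lt_of_lt_of_le hy (hle k)) hstep
    rw [Finset.sum_filter] at *
    rw [← Finset.sum_Ioc_consecutive _ (Nat.floor_mono (hle k)) (Nat.floor_mono hstep)]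
    rw [Real.log_rpow (by linarith), Real.log_rpow (by linarith)] at hb
    have h1 : (lam ^ (k+1) * Real.log y - lam ^ k * Real.log y + 8) / (lam ^ k * Real.log y) ≤
        (lam - 1) + 8 / Real.log y := by
      have hp : 1 ≤ lam ^ k := one_le_pow₀ hlam
      rw [add_div, pow_succ]
      apply add_le_add
      · rw [div_le_iff₀ (by positivity)]; apply le_of_eq; ring
      · apply div_le_div_of_nonneg_left (by norm_num) hly
        nlinarith
    push_cast
    linarith

theorem bv_mertens (α β : ℝ) (hα : 0 < α) (hαβ : α ≤ β) (hβ : β < α * Real.exp (1/2)) :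
    ∃ c > 0, ∀ᶠ p : ℕ in Filter.atTop,
      ∑ l ∈ (Finset.Ioc ⌊(p:ℝ)^α⌋₊ ⌊(p:ℝ)^β⌋₊).filter Nat.Prime, (1:ℝ) / l ≤ 1/2 - c := by
  have hu : β / α < Real.exp (1/2) := by rw [div_lt_iff₀ hα]; linarith
  have hu1 : 1 ≤ β / α := by rw [le_div_iff₀ hα]; linarith
  have hlu : Real.log (β/α) < 1/2 := (Real.log_lt_iff_lt_exp (by linarith)).2 hu
  have hlu0 : 0 ≤ Real.log (β/α) := Real.log_nonneg hu1
  obtain ⟨s, hs1, hs2⟩ := exists_between hlu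
  have hus : β / α < Real.exp s := (Real.log_lt_iff_lt_exp (by linarith)).1 hs1
  have ht := Real.tendsto_one_add_div_pow_exp s
  obtain ⟨k, hk, hk1⟩ := ((ht.eventually (lt_mem_nhds hus)).and
    (Filter.eventually_ge_atTop 1)).exists
  have hk0 : (0:ℝ) < k := by exact_mod_cast hk1
  refine ⟨(1/2 - s)/2, by linarith, ?_⟩
  have hlim : Filter.Tendsto (fun p : ℕ => Real.log ((p:ℝ)^α)) Filter.atTop Filter.atTop :=
    Real.tendsto_log_atTop.comp ((tendsto_rpow_atTop hα).comp tendsto_natCast_atTop_atTop)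
  filter_upwards [hlim.eventually_ge_atTop (8*k/((1/2 - s)/2)), Filter.eventually_gt_atTop 1]
    with p hp hp1
  have hp1' : (1:ℝ) < p := by exact_mod_cast hp1
  have hy : 1 < (p:ℝ)^α := Real.one_lt_rpow hp1' hα
  have hly := Real.log_pos hy
  have hc := bv_chain ((p:ℝ)^α) (1 + s/k) hy (by have : 0 ≤ s/k := div_nonneg (by linarith) hk0.le
                                                 linarith) k
  have h1 : (p:ℝ)^β ≤ ((p:ℝ)^α) ^ ((1 + s/k)^k) := by
    rw [← Real.rpow_mul (by linarith)]
    apply Real.rpow_le_rpow_of_exponent_le hp1'.le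
    rw [div_lt_iff₀ hα] at hk
    linarith
  calc _ ≤ ∑ l ∈ (Finset.Ioc ⌊(p:ℝ)^α⌋₊ ⌊((p:ℝ)^α) ^ ((1 + s/k)^k)⌋₊).filter Nat.Prime, (1:ℝ) / l := by
        apply Finset.sum_le_sum_of_subset_of_nonneg
        · apply Finset.filter_subset_filter
          exact Finset.Ioc_subset_Ioc_right (Nat.floor_mono h1)
        · intros; positivity
    _ ≤ _ := hc
    _ = s + 8 * k / Real.log ((p:ℝ)^α) := by field_simp; ring
    _ ≤ s + (1/2 - s)/2 := by
        rw [div_le_iff₀ (by linarith)] at hp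
        have : 8 * k / Real.log ((p:ℝ)^α) ≤ (1/2 - s)/2 := by
          rw [div_le_iff₀ hly]; linarith
        linarith
    _ = _ := by ring

end

section

theorem bv_pi (κ : ℝ) (hκ : 0 < κ) :
    ∀ᶠ x : ℝ in Filter.atTop, x ^ (1 - κ) ≤ Nat.primeCounting ⌊x⌋₊ := by
  have h1 := (isLittleO_log_rpow_atTop hκ).bound (show (0:ℝ) < 1/2 by norm_num)
  have h2 := (isLittleO_log_rpow_atTop (show (0:ℝ) < 1 by norm_num)).bound (show (0:ℝ) < 1/100 by norm_num)
  filter_upwards [h1, h2, Filter.eventually_ge_atTop 20] with x h1 h2 hx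
  have hlx : 0 < Real.log x := Real.log_pos (by linarith)
  rw [Real.norm_of_nonneg hlx.le, Real.norm_of_nonneg (by positivity)] at h1 h2
  rw [Real.rpow_one] at h2
  refine le_trans ?_ (Chebyshev.pi_ge' (by linarith))
  rw [le_div_iff₀ hlx]
  have h3 : Real.log (x + 2) ≤ 1 + Real.log x := by
    have : Real.log (x + 2) ≤ Real.log (2 * x) := Real.log_le_log (by linarith) (by linarith)
    rw [Real.log_mul (by norm_num) (by linarith)] at this
    have := Real.log_two_lt_d9
    linarith
  have h4 := Real.log_two_gt_d9
  have h5 : x ^ (1 - κ) * Real.log x ≤ x / 2 := by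
    calc x ^ (1 - κ) * Real.log x ≤ x ^ (1 - κ) * (1/2 * x ^ κ) := by gcongr
      _ = (x ^ (1 - κ) * x ^ κ) / 2 := by ring
      _ = x / 2 := by rw [← Real.rpow_add (by linarith)]; simp
  nlinarith

theorem bv_qsmall_comb (p q z : ℕ) (hp : p.Prime) (hq : q.Prime) (hqp : q ∣ p - 1)
    (hz : z ^ 7 ≤ p)
    (hres : ∀ n : ℕ, 1 ≤ n → n ≤ z → ∃ y : (ZMod p)ˣ, ((y ^ q : (ZMod p)ˣ) : ZMod p) = (n : ZMod p)) :
    (Nat.primeCounting z).choose 7 * q ≤ p := by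
  have : Fact p.Prime := ⟨hp⟩
  obtain ⟨G, hG⟩ := hqp
  have hp2 := hp.two_le
  have hG0 : 0 < G := by
    rcases Nat.eq_zero_or_pos G with h | h
    · subst h; omega
    · exact h
  have hroot : ∀ l : ℕ, 1 ≤ l → l ≤ z → (l : ZMod p) ^ G = 1 := by
    intro l h1 h2
    obtain ⟨y, hy⟩ := hres l h1 h2
    rw [← hy, Units.val_pow_eq_pow_val, ← pow_mul, ← hG, ← Units.val_pow_eq_pow_val,
      ZMod.units_pow_card_sub_one_eq_one, Units.val_one]
  have hcard : (Finset.powersetCard 7 z.primesLE).card ≤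
      (Polynomial.nthRoots G (1 : ZMod p)).toFinset.card := by
    apply Finset.card_le_card_of_injOn (fun S => ((∏ l ∈ S, l : ℕ) : ZMod p))
    · intro S hS
      have hS := Finset.mem_powersetCard.1 hS
      simp only [Finset.mem_coe, Multiset.mem_toFinset, Polynomial.mem_nthRoots hG0]
      rw [Nat.cast_prod, ← Finset.prod_pow]
      apply Finset.prod_eq_one
      intro l hl
      have := Nat.mem_primesLE.1 (hS.1 hl)
      exact hroot l this.2.one_lt.le this.1
    · intro S hS T hT hST
      have hS := Finset.mem_powersetCard.1 hS
      have hT := Finset.mem_powersetCard.1 hT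
      have key : ∀ S : Finset ℕ, S ⊆ z.primesLE ∧ S.card = 7 →
          1 ≤ ∏ l ∈ S, l ∧ ∏ l ∈ S, l ≤ p ∧ (∏ l ∈ S, l).primeFactors = S := by
        intro S hS
        refine ⟨?_, ?_, ?_⟩
        · apply Nat.one_le_iff_ne_zero.2
          apply Nat.pos_iff_ne_zero.1
          apply Finset.prod_pos
          intro l hl
          exact (Nat.mem_primesLE.1 (hS.1 hl)).2.pos
        · calc ∏ l ∈ S, l ≤ z ^ S.card := Finset.prod_le_pow_card _ _ _
                (fun l hl => (Nat.mem_primesLE.1 (hS.1 hl)).1)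
            _ ≤ p := by rw [hS.2]; exact hz
        · exact Nat.primeFactors_prod fun l hl => (Nat.mem_primesLE.1 (hS.1 hl)).2
      obtain ⟨s1, s2, s3⟩ := key S hS
      obtain ⟨t1, t2, t3⟩ := key T hT
      have hmod := (ZMod.natCast_eq_natCast_iff _ _ _).1 hST
      have heq := Nat.ModEq.eq_of_abs_lt hmod (by rw [abs_lt]; constructor <;> omega)
      rw [← s3, ← t3, heq]
  rw [Finset.card_powersetCard, Nat.primesLE_card_eq_primeCounting] at hcard
  have h2 : (Nat.primeCounting z).choose 7 ≤ G :=
    hcard.trans ((Multiset.toFinset_card_le _).trans (Polynomial.card_nthRoots _ _))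
  calc _ ≤ G * q := Nat.mul_le_mul_right _ h2
    _ ≤ p := by rw [mul_comm, ← hG]; omega

theorem bv_qsmall (κ : ℝ) (hκ : 0 < κ) :
    ∀ᶠ p : ℕ in Filter.atTop, p.Prime → ∀ q : ℕ, q.Prime → q ∣ p - 1 →
      (∀ n : ℕ, 1 ≤ n → (n:ℝ) ≤ (p:ℝ) ^ (1/7 : ℝ) →
        ∃ y : (ZMod p)ˣ, ((y ^ q : (ZMod p)ˣ) : ZMod p) = (n : ZMod p)) →
      (q : ℝ) ≤ (p:ℝ) ^ κ := by
  have hlim7 : Filter.Tendsto (fun p : ℕ => (p:ℝ) ^ (1/7 : ℝ)) Filter.atTop Filter.atTop :=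
    (tendsto_rpow_atTop (by norm_num)).comp tendsto_natCast_atTop_atTop
  have hlimk : Filter.Tendsto (fun p : ℕ => (p:ℝ) ^ (κ/2)) Filter.atTop Filter.atTop :=
    (tendsto_rpow_atTop (by linarith)).comp tendsto_natCast_atTop_atTop
  have hpi := hlim7.eventually (bv_pi (κ/2) (by linarith))
  have hpi12 := (Nat.tendsto_primeCounting.comp (tendsto_nat_floor_atTop.comp hlim7)).eventually_ge_atTop 12
  filter_upwards [hpi, hpi12, hlimk.eventually_ge_atTop 645120, Filter.eventually_gt_atTop 1]
    with p h1 h2 h3 hp1 hp q hq hqp hres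
  have hp0 : (0:ℝ) < p := by exact_mod_cast (by omega : 0 < p)
  have hz : ⌊(p:ℝ) ^ (1/7 : ℝ)⌋₊ ^ 7 ≤ p := by
    have : ((⌊(p:ℝ) ^ (1/7 : ℝ)⌋₊ : ℕ) : ℝ) ^ 7 ≤ p := by
      calc _ ≤ ((p:ℝ) ^ (1/7 : ℝ)) ^ 7 := by
            gcongr
            exact Nat.floor_le (by positivity)
        _ = p := by rw [← Real.rpow_natCast, ← Real.rpow_mul hp0.le]; norm_num
    exact_mod_cast this
  have hc := bv_qsmall_comb p q _ hp hq hqp hz (fun n hn1 hn2 => hres n hn1 (by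
    exact (Nat.cast_le.2 hn2).trans (Nat.floor_le (by positivity))))
  simp only [Function.comp_apply] at h2
  set M := Nat.primeCounting ⌊(p:ℝ) ^ (1/7 : ℝ)⌋₊ with hM
  have hch := Nat.pow_le_choose (α := ℝ) 7 M
  have hM12 : (12:ℝ) ≤ M := by exact_mod_cast h2
  have hsub : (M:ℝ)/2 ≤ ((M + 1 - 7 : ℕ) : ℝ) := by
    rw [show M + 1 - 7 = M - 6 by omega, Nat.cast_sub (by omega)]
    push_cast; linarith
  have hch2 : (M:ℝ)^7 / 645120 ≤ M.choose 7 := by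
    refine le_trans ?_ hch
    calc (M:ℝ)^7 / 645120 = ((M:ℝ)/2)^7 / 5040 := by ring
      _ ≤ _ := by
        rw [show ((Nat.factorial 7 : ℕ) : ℝ) = 5040 by norm_num [Nat.factorial]]
        gcongr
  have hM7 : (p:ℝ) ^ (1 - κ/2) ≤ (M:ℝ)^7 := by
    calc (p:ℝ) ^ (1 - κ/2) = (((p:ℝ) ^ (1/7 : ℝ)) ^ (1 - κ/2))^7 := by
          rw [← Real.rpow_natCast, ← Real.rpow_mul hp0.le, ← Real.rpow_mul hp0.le]
          congr 1; push_cast; ring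
      _ ≤ _ := by gcongr
  have hcR : (M.choose 7 : ℝ) * q ≤ p := by exact_mod_cast hc
  have hfin : (p:ℝ) ^ (1 - κ/2) * q ≤ (p:ℝ)^(1 - κ/2) * (p:ℝ)^κ := by
    calc (p:ℝ) ^ (1 - κ/2) * q ≤ (M:ℝ)^7 * q := by gcongr
      _ = 645120 * ((M:ℝ)^7 / 645120 * q) := by ring
      _ ≤ 645120 * (M.choose 7 * q) := by gcongr
      _ ≤ (p:ℝ)^(κ/2) * p := by gcongr
      _ = _ := by
        nth_rewrite 2 [← Real.rpow_one (p:ℝ)]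
        rw [← Real.rpow_add hp0, ← Real.rpow_add hp0]; congr 1; ring
  exact le_of_mul_le_mul_left hfin (by positivity)

end

section

set_option maxHeartbeats 1000000 in
theorem bv_burgess_asymp (δ η : ℝ) (hδ : 0 < δ) (hδ1 : δ ≤ 1/20) (hη : 0 < η) :
    ∀ᶠ p : ℕ in Filter.atTop, p.Prime → ∀ q : ℕ, q.Prime → q ∣ p - 1 → (q:ℝ) ≤ (p:ℝ)^(δ/6) →
      ∀ χ : MulChar (ZMod p) ℂ, χ ≠ 1 → χ ^ q = 1 →
        ‖∑ n ∈ Finset.range ⌊(p:ℝ)^(1/4+δ)⌋₊, χ ((n + 1 : ℕ) : ZMod p)‖ ≤ η * ⌊(p:ℝ)^(1/4+δ)⌋₊ := by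
  obtain ⟨r, hr⟩ := exists_nat_ge (2/δ)
  have hr0 : (0:ℝ) < r := lt_of_lt_of_le (by positivity) hr
  have hr1 : 1 ≤ r := by
    have : 0 < r := by exact_mod_cast hr0
    omega
  have hrd : 1/(2*(r:ℝ)) ≤ δ/4 := by
    rw [div_le_iff₀ hδ] at hr
    rw [div_le_iff₀ (by positivity)]
    nlinarith
  obtain ⟨A0, hA0⟩ := exists_nat_ge (3/η)
  have hA0R : (0:ℝ) < A0 := lt_of_lt_of_le (by positivity) hA0
  have hA01 : 1 ≤ A0 := by
    have : 0 < A0 := by exact_mod_cast hA0R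
    omega
  set K : ℝ := 4*((r:ℝ)^(2*r) + 60*r)/(η/3)^(2*r) with hK
  have lim : ∀ s : ℝ, 0 < s → Filter.Tendsto (fun p : ℕ => (p:ℝ) ^ s) Filter.atTop Filter.atTop :=
    fun s hs => (tendsto_rpow_atTop hs).comp tendsto_natCast_atTop_atTop
  have hpi := (lim (1/4+δ/2) (by linarith)).eventually (bv_pi (δ/4) (by linarith))
  filter_upwards [hpi, (lim (δ/2) (by linarith)).eventually_ge_atTop K,
    (lim (δ/4) (by linarith)).eventually_ge_atTop (24/η),
    (lim (1/4) (by norm_num)).eventually_ge_atTop (2*A0),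
    Filter.eventually_gt_atTop 1] with p hpi h1 h2 h3 hp1 hp q hq hqp hqk χ hχ1 hχq
  have : Fact p.Prime := ⟨hp⟩
  have hpR : (1:ℝ) < p := by exact_mod_cast hp1
  have hp0 : (0:ℝ) < p := by linarith
  have mono : ∀ s t : ℝ, s ≤ t → (p:ℝ)^s ≤ (p:ℝ)^t := fun s t h =>
    Real.rpow_le_rpow_of_exponent_le hpR.le h
  have one_le : ∀ s : ℝ, 0 ≤ s → 1 ≤ (p:ℝ)^s := fun s h => Real.one_le_rpow hpR.le h
  set N := ⌊(p:ℝ)^(1/4+δ)⌋₊ with hN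
  set A := ⌊(p:ℝ)^(1/4+δ/2)⌋₊ with hA
  set B := ⌈(p:ℝ)^(1/(2*(r:ℝ)))⌉₊ with hB
  have hNle : (N:ℝ) ≤ (p:ℝ)^(1/4+δ) := Nat.floor_le (by positivity)
  have hAle : (A:ℝ) ≤ (p:ℝ)^(1/4+δ/2) := Nat.floor_le (by positivity)
  have hBge : (p:ℝ)^(1/(2*(r:ℝ))) ≤ B := Nat.le_ceil _
  have hBle : (B:ℝ) ≤ 2 * (p:ℝ)^(1/(2*(r:ℝ))) := by
    have := Nat.ceil_lt_add_one (a := (p:ℝ)^(1/(2*(r:ℝ)))) (by positivity)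
    have := one_le (1/(2*(r:ℝ))) (by positivity)
    linarith
  have hNge : (p:ℝ)^(1/4+δ) / 2 ≤ N := by
    have h := Nat.lt_floor_add_one ((p:ℝ)^(1/4+δ))
    have h' : (1:ℝ) ≤ N := by
      have : 1 ≤ N := Nat.le_floor (by push_cast; exact one_le _ (by linarith))
      exact_mod_cast this
    linarith
  have hB1 : 1 ≤ B := by
    have : (1:ℝ) ≤ B := (one_le (1/(2*(r:ℝ))) (by positivity)).trans hBge
    exact_mod_cast this
  have hB1R : (1:ℝ) ≤ B := by exact_mod_cast hB1
  have hBp : B ≤ p := by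
    apply Nat.ceil_le.2
    conv_rhs => rw [← Real.rpow_one (p:ℝ)]
    apply mono
    linarith
  have hAp : A < p := by
    have : (A:ℝ) < p := by
      refine lt_of_le_of_lt hAle ?_
      conv_rhs => rw [← Real.rpow_one (p:ℝ)]
      exact Real.rpow_lt_rpow_of_exponent_lt hpR (by linarith)
    exact_mod_cast this
  have hAN : A * N < p := by
    have : (A:ℝ) * N < p := by
      calc (A:ℝ) * N ≤ (p:ℝ)^(1/4+δ/2) * (p:ℝ)^(1/4+δ) := by gcongr
        _ = (p:ℝ)^((1/4+δ/2) + (1/4+δ)) := (Real.rpow_add hp0 _ _).symm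
        _ < (p:ℝ)^(1:ℝ) := Real.rpow_lt_rpow_of_exponent_lt hpR (by linarith)
        _ = p := Real.rpow_one _
    exact_mod_cast this
  set P := A.primesLE.filter (fun a => A0 ≤ a) with hPdef
  have hPcard : (p:ℝ)^(1/4+δ/4) / 2 ≤ P.card := by
    have e1 : A.primeCounting ≤ P.card + A0 := by
      rw [← Nat.primesLE_card_eq_primeCounting,
        ← Finset.card_filter_add_card_filter_not (s := A.primesLE) (fun a => A0 ≤ a)]
      apply Nat.add_le_add_left
      calc _ ≤ (Finset.range A0).card := by
            apply Finset.card_le_card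
            intro a ha
            have := (Finset.mem_filter.1 ha).2
            simp only [Finset.mem_range]; omega
        _ = A0 := Finset.card_range _
    have e1R : (A.primeCounting : ℝ) ≤ P.card + A0 := by exact_mod_cast e1
    have e2 : (p:ℝ)^(1/4+δ/4) ≤ A.primeCounting := by
      refine le_trans ?_ hpi
      rw [← Real.rpow_mul hp0.le]
      apply mono
      nlinarith
    have e3 : 2 * (A0:ℝ) ≤ (p:ℝ)^(1/4+δ/4) := h3.trans (mono _ _ (by linarith))
    linarith
  have hPne : P.Nonempty := by
    rw [← Finset.card_pos]
    have : (0:ℝ) < P.card := lt_of_lt_of_le (by positivity) hPcard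
    exact_mod_cast this
  have hsq : Real.sqrt p = (p:ℝ)^(1/2 : ℝ) := Real.sqrt_eq_rpow _
  have hBr : (p:ℝ)^(1/2:ℝ) ≤ (B:ℝ)^r := by
    calc (p:ℝ)^(1/2:ℝ) = ((p:ℝ)^(1/(2*(r:ℝ))))^r := by
          rw [← Real.rpow_natCast, ← Real.rpow_mul hp0.le]; congr 1; field_simp
      _ ≤ _ := by gcongr
  have hB2r : (B:ℝ)^r * p ≤ (B:ℝ)^(2*r) * (p:ℝ)^(1/2:ℝ) := by
    have e : (p:ℝ) = (p:ℝ)^(1/2:ℝ) * (p:ℝ)^(1/2:ℝ) := by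
      rw [← Real.rpow_add hp0]; norm_num
    calc (B:ℝ)^r * p = (B:ℝ)^r * ((p:ℝ)^(1/2:ℝ) * (p:ℝ)^(1/2:ℝ)) := by rw [← e]
      _ ≤ (B:ℝ)^r * ((B:ℝ)^r * (p:ℝ)^(1/2:ℝ)) := by gcongr
      _ = _ := by rw [two_mul, pow_add]; ring
  have hq3 : (q:ℝ)^3 ≤ (p:ℝ)^(δ/2) := by
    calc (q:ℝ)^3 ≤ ((p:ℝ)^(δ/6))^3 := by gcongr
      _ = _ := by rw [← Real.rpow_natCast, ← Real.rpow_mul hp0.le]; congr 1; push_cast; ring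
  have hη3 : 0 < (η/3)^(2*r) := by positivity
  have hmid : ((r:ℝ)^(2*r) + 60*r*q^3) * (p:ℝ)^(1/2:ℝ) ≤ (η/3)^(2*r) * (P.card * N) := by
    have hone := one_le (δ/2) (by linarith)
    rw [hK, div_le_iff₀ hη3] at h1
    calc ((r:ℝ)^(2*r) + 60*r*q^3) * (p:ℝ)^(1/2:ℝ)
        ≤ ((r:ℝ)^(2*r) * (p:ℝ)^(δ/2) + 60*r*(p:ℝ)^(δ/2)) * (p:ℝ)^(1/2:ℝ) := by
          gcongr
          exact le_mul_of_one_le_right (by positivity) hone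
      _ = (4*((r:ℝ)^(2*r) + 60*r)) * ((p:ℝ)^(δ/2) * (p:ℝ)^(1/2:ℝ)) / 4 := by ring
      _ ≤ ((p:ℝ)^(δ/2) * (η/3)^(2*r)) * ((p:ℝ)^(δ/2) * (p:ℝ)^(1/2:ℝ)) / 4 := by gcongr
      _ = (η/3)^(2*r) * ((p:ℝ)^(δ/2 + δ/2 + 1/2) / 4) := by
          rw [Real.rpow_add hp0, Real.rpow_add hp0]; ring
      _ ≤ (η/3)^(2*r) * ((p:ℝ)^((1/4+δ/4) + (1/4 + δ)) / 4) := by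
          apply mul_le_mul_of_nonneg_left _ hη3.le
          apply div_le_div_of_nonneg_right _ (by norm_num)
          apply mono
          linarith
      _ = (η/3)^(2*r) * (((p:ℝ)^(1/4+δ/4) / 2) * ((p:ℝ)^(1/4 + δ) / 2)) := by
          rw [Real.rpow_add hp0 (1/4+δ/4)]; ring
      _ ≤ _ := by gcongr
  have hmain : (r : ℝ)^(2*r) * B^r * p + B^(2*r) * (60*r*q^3*Real.sqrt p)
      ≤ (η/3)^(2*r) * B^(2*r) * (P.card * N) := by
    rw [hsq]
    calc (r : ℝ)^(2*r) * B^r * p + B^(2*r) * (60*r*q^3*(p:ℝ)^(1/2:ℝ))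
        = (r : ℝ)^(2*r) * (B^r * p) + B^(2*r) * (60*r*q^3*(p:ℝ)^(1/2:ℝ)) := by ring
      _ ≤ (r : ℝ)^(2*r) * ((B:ℝ)^(2*r) * (p:ℝ)^(1/2:ℝ)) + B^(2*r) * (60*r*q^3*(p:ℝ)^(1/2:ℝ)) := by
          gcongr
      _ = B^(2*r) * (((r:ℝ)^(2*r) + 60*r*q^3) * (p:ℝ)^(1/2:ℝ)) := by ring
      _ ≤ B^(2*r) * ((η/3)^(2*r) * (P.card * N)) := by gcongr
      _ = _ := by ring
  have hfin := bv_burgess p q r B A A0 N hq hqp χ hχ1 hχq hr1 hBp hB1 hA01 hAN hAp (η/3)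
    (by linarith) P (fun a ha => by
      obtain ⟨ha1, ha2⟩ := Finset.mem_filter.1 ha
      obtain ⟨ha3, ha4⟩ := Nat.mem_primesLE.1 ha1
      exact ⟨ha4, ha2, ha3⟩) hPne hmain
  refine hfin.trans ?_
  have t1 : (N:ℝ) / A0 ≤ η/3 * N := by
    rw [div_le_iff₀ hA0R]
    rw [div_le_iff₀ hη] at hA0
    have hN0 : (0:ℝ) ≤ N := by positivity
    have := mul_le_mul_of_nonneg_left hA0 hN0
    linarith
  have t2 : 2 * (A:ℝ) * B ≤ η/3 * N := by
    rw [div_le_iff₀ hη] at h2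
    have e1 : (p:ℝ)^(1/4+δ/2) * (p:ℝ)^(1/(2*(r:ℝ))) * (p:ℝ)^(δ/4) ≤ (p:ℝ)^(1/4+δ) := by
      rw [← Real.rpow_add hp0, ← Real.rpow_add hp0]
      apply mono
      linarith
    calc 2 * (A:ℝ) * B ≤ 2 * (p:ℝ)^(1/4+δ/2) * (2 * (p:ℝ)^(1/(2*(r:ℝ)))) := by gcongr
      _ = ((p:ℝ)^(1/4+δ/2) * (p:ℝ)^(1/(2*(r:ℝ)))) * 24 / 6 := by ring
      _ ≤ ((p:ℝ)^(1/4+δ/2) * (p:ℝ)^(1/(2*(r:ℝ)))) * ((p:ℝ)^(δ/4) * η) / 6 := by gcongr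
      _ = η/3 * (((p:ℝ)^(1/4+δ/2) * (p:ℝ)^(1/(2*(r:ℝ))) * (p:ℝ)^(δ/4)) / 2) := by ring
      _ ≤ η/3 * ((p:ℝ)^(1/4+δ) / 2) := by gcongr
      _ ≤ η/3 * N := by gcongr
  linarith

end

theorem bv_smooth (p : ℕ) (χ : MulChar (ZMod p) ℂ) (n : ℕ) (hn : n ≠ 0)
    (h : ∀ l : ℕ, l.Prime → l ∣ n → χ (l : ZMod p) = 1) : χ (n : ZMod p) = 1 := by
  induction n using induction_on_primes with
  | zero => exact absurd rfl hn
  | one => simp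
  | prime_mul l a hl ih =>
    rw [Nat.cast_mul, map_mul, h l hl (Dvd.intro _ rfl), one_mul]
    apply ih
    · rintro rfl; simp at hn
    · intro l' hl' hd
      exact h l' hl' (Dvd.dvd.mul_left hd _)

theorem bv_vino (p N Y : ℕ) (χ : MulChar (ZMod p) ℂ)
    (hall : ∀ l : ℕ, l.Prime → l ≤ Y → χ (l : ZMod p) = 1) :
    (N:ℝ) * (1 - 2 * ∑ l ∈ (Finset.Ioc Y N).filter Nat.Prime, (1:ℝ) / l) ≤
      ‖∑ n ∈ Finset.range N, χ ((n + 1 : ℕ) : ZMod p)‖ := by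
  set T := (Finset.Ioc Y N).filter Nat.Prime with hT
  have hpt : ∀ n ∈ Finset.range N,
      (1:ℝ) - 2 * ∑ l ∈ T, (if l ∣ n + 1 then (1:ℝ) else 0) ≤ (χ ((n + 1 : ℕ) : ZMod p)).re := by
    intro n hn
    have hnN := Finset.mem_range.1 hn
    have hnn : ∀ l ∈ T, (0:ℝ) ≤ (if l ∣ n + 1 then (1:ℝ) else 0) := by
      intro l _; split_ifs <;> norm_num
    by_cases hex : ∃ l ∈ T, l ∣ n + 1
    · obtain ⟨l, hl, hld⟩ := hex
      have h1 := Finset.single_le_sum hnn hl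
      rw [if_pos hld] at h1
      have h2 := DirichletCharacter.norm_le_one χ ((n + 1 : ℕ) : ZMod p)
      have h3 := (abs_le.1 (Complex.abs_re_le_norm (χ ((n + 1 : ℕ) : ZMod p)))).1
      linarith
    · push Not at hex
      have h1 : χ ((n + 1 : ℕ) : ZMod p) = 1 := by
        apply bv_smooth p χ (n+1) (by omega)
        intro l hl hd
        apply hall l hl
        by_contra hlt
        apply hex l _ hd
        rw [hT, Finset.mem_filter, Finset.mem_Ioc]
        have := Nat.le_of_dvd (by omega) hd
        exact ⟨⟨by omega, by omega⟩, hl⟩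
      have h2 := Finset.sum_nonneg hnn
      rw [h1, Complex.one_re]
      linarith
  have hsum := Finset.sum_le_sum hpt
  have hre := Complex.re_le_norm (∑ n ∈ Finset.range N, χ ((n + 1 : ℕ) : ZMod p))
  rw [Complex.re_sum] at hre
  refine le_trans ?_ (hsum.trans hre)
  rw [Finset.sum_sub_distrib, ← Finset.mul_sum, Finset.sum_comm]
  simp only [Finset.sum_const, Finset.card_range, nsmul_eq_mul, mul_one]
  have hcnt : ∑ l ∈ T, ∑ n ∈ Finset.range N, (if l ∣ n + 1 then (1:ℝ) else 0) ≤
      N * ∑ l ∈ T, (1:ℝ) / l := by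
    rw [Finset.mul_sum]
    apply Finset.sum_le_sum
    intro l _
    rw [Finset.sum_boole, Nat.card_multiples]
    have := Nat.cast_div_le (α := ℝ) (m := N) (n := l)
    rw [mul_one_div]
    exact this
  linarith

/-- **Burgess bound + Vinogradov trick.** For every `ε > 0` there exists `p₀` such that for
every prime `p ≥ p₀` and every prime `q` dividing `p - 1`, there is an integer
`1 ≤ n ≤ p^{1/(4√e)+ε}` whose residue in `(ZMod p)ˣ` is not a `q`-th power. -/
theorem burgess_vinogradov_nonresidue (ε : ℝ) (hε : 0 < ε) :
    ∃ p₀ : ℕ, ∀ p : ℕ, p.Prime → p₀ ≤ p →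
      ∀ q : ℕ, q.Prime → q ∣ p - 1 →
        ∃ n : ℕ, 1 ≤ n ∧ (n : ℝ) ≤ (p : ℝ) ^ (1 / (4 * Real.sqrt (Real.exp 1)) + ε) ∧
          ¬ ∃ y : (ZMod p)ˣ, ((y ^ q : (ZMod p)ˣ) : ZMod p) = (n : ZMod p) := by
  obtain ⟨δ, hδ, hδε, hδ1⟩ : ∃ δ : ℝ, 0 < δ ∧ δ ≤ ε ∧ δ ≤ 1/20 :=
    ⟨min ε (1/20), lt_min hε (by norm_num), min_le_left _ _, min_le_right _ _⟩
  have hE : Real.sqrt (Real.exp 1) = Real.exp (1/2) := (Real.exp_half 1).symm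
  set E := Real.exp (1/2) with hEdef
  have hE1 : 1 < E := Real.one_lt_exp_iff.2 (by norm_num)
  have hE2 : E ≤ 7/4 := by
    rw [← hE]
    apply Real.sqrt_le_iff.2
    have := Real.exp_one_lt_d9
    constructor <;> norm_num <;> linarith
  set α : ℝ := 1 / (4 * E) + δ with hα
  have hα7 : 1/7 ≤ α := by
    have : 1/7 ≤ 1/(4*E) := one_div_le_one_div_of_le (by linarith) (by linarith)
    linarith
  have hαβ : α ≤ 1/4 + δ := by
    have : 1/(4*E) ≤ 1/4 := one_div_le_one_div_of_le (by norm_num) (by linarith)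
    linarith
  have hβ : 1/4 + δ < α * E := by
    have e : α * E = 1/4 + δ * E := by
      rw [hα]; field_simp
    rw [e]
    nlinarith
  obtain ⟨c, hc, hmert⟩ := bv_mertens α (1/4+δ) (by linarith) hαβ hβ
  have hburg := bv_burgess_asymp δ c hδ hδ1 hc
  have hqs := bv_qsmall (δ/6) (by linarith)
  obtain ⟨p0, hp0⟩ := Filter.eventually_atTop.1
    ((hmert.and (hburg.and hqs)).and (Filter.eventually_gt_atTop 1))
  refine ⟨p0, fun p hp hpp q hq hqp => ?_⟩
  obtain ⟨⟨hM, hBu, hQ⟩, hp1⟩ := hp0 p hpp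
  have hFact : Fact p.Prime := ⟨hp⟩
  have hpR : (1:ℝ) ≤ p := by exact_mod_cast hp1.le
  by_contra! hcon
  have hres : ∀ n : ℕ, 1 ≤ n → (n:ℝ) ≤ (p:ℝ)^α →
      ∃ y : (ZMod p)ˣ, ((y ^ q : (ZMod p)ˣ) : ZMod p) = (n : ZMod p) := by
    intro n hn1 hn2
    apply hcon n hn1
    refine hn2.trans (Real.rpow_le_rpow_of_exponent_le hpR ?_)
    rw [hE]; linarith
  have hqk := hQ hp q hq hqp (fun n h1 h2 => hres n h1
    (h2.trans (Real.rpow_le_rpow_of_exponent_le hpR hα7)))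
  obtain ⟨χ, hχ⟩ := MulChar.exists_mulChar_orderOf (R := ℂ) (ZMod p) (n := q)
    (by rw [ZMod.card]; exact hqp) (Complex.isPrimitiveRoot_exp q hq.ne_zero)
  have hχq : χ ^ q = 1 := by rw [← hχ]; exact pow_orderOf_eq_one χ
  have hχ1 : χ ≠ 1 := by
    rintro rfl
    rw [orderOf_one] at hχ
    exact hq.one_lt.ne hχ
  have hup := hBu hp q hq hqp hqk χ hχ1 hχq
  have hlow := bv_vino p ⌊(p:ℝ)^(1/4+δ)⌋₊ ⌊(p:ℝ)^α⌋₊ χ (by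
    intro l hl hle
    obtain ⟨y, hy⟩ := hres l hl.one_lt.le
      ((Nat.cast_le.2 hle).trans (Nat.floor_le (by positivity)))
    rw [← hy, Units.val_pow_eq_pow_val, map_pow, ← MulChar.pow_apply_coe, hχq,
      MulChar.one_apply_coe])
  have hN1 : (1:ℝ) ≤ ⌊(p:ℝ)^(1/4+δ)⌋₊ := by
    have : 1 ≤ ⌊(p:ℝ)^(1/4+δ)⌋₊ :=
      Nat.le_floor (by push_cast; exact Real.one_le_rpow hpR (by linarith))
    exact_mod_cast this
  have h := hlow.trans hup
  have h2 : 2 * c ≤ 1 - 2 * ∑ l ∈ (Finset.Ioc ⌊(p:ℝ)^α⌋₊ ⌊(p:ℝ)^(1/4+δ)⌋₊).filter Nat.Prime,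
    (1:ℝ) / l := by linarith
  have h3 := mul_le_mul_of_nonneg_left h2 (by linarith : (0:ℝ) ≤ ⌊(p:ℝ)^(1/4+δ)⌋₊)
  nlinarith
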